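/- arXiv:1608.04575 — 2 statements merged into one kernel-verified Lean document; each statement's English description precedes it below -/
import Mathlib

section
/- Let a = (a₁,…,aₙ) ∈ [1,∞)ⁿ and let φ₀, φ, ψ₀, ψ ∈ 𝓢(ℝⁿ) be supported in {x ∈ ℝⁿ : xₙ < 0}, with φ and ψ having vanishing moments of all orders. Then for every η ∈ 𝓢(ℝⁿ) the series T η := Σ_{j=0}^∞ φ̌_j * (1_{ℝⁿ₊} · (ψ̌_j * η)) converges in 𝓢(ℝⁿ); the resulting map T : 𝓢(ℝⁿ) → 𝓢(ℝⁿ) is linear and continuous, every Tη is supported in the closed half-space {x : xₙ ≥ 0}, and the operator E_u(f) = Σ_{j=0}^∞ ψ_j * e₊(φ_j * f) satisfies ⟨E_u(f), η⟩ = ⟨f, Tη⟩ for all f ∈ 𝓢'(ℝⁿ) and η ∈ 𝓢(ℝⁿ). In particular E_u : 𝓢'(ℝⁿ) → 𝓢'(ℝⁿ) is weak*-continuous, and E_u(f) = E_u(g) whenever f, g ∈ 𝓢'(ℝⁿ) agree on all Schwartz functions supported in {x : xₙ ≥ 0}. -/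
open MeasureTheory Filter Topology

noncomputable section

/-- Anisotropic dilation: `θ_0 = θ₀` and `θ_j(x) = 2^{j|a|} θ(2^{ja}x)` for `j ≥ 1`. -/
def anisoDil {m : ℕ} (a : Fin m → ℝ) (θ₀ θ : (Fin m → ℝ) → ℝ) (j : ℕ)
    (x : Fin m → ℝ) : ℝ :=
  if j = 0 then θ₀ x
  else (2:ℝ) ^ ((j:ℝ) * ∑ i, a i) * θ (fun i => (2:ℝ) ^ ((j:ℝ) * a i) * x i)

/-- `θ` has vanishing moments of all orders. -/
def VanishingMoments {m : ℕ} (θ : (Fin m → ℝ) → ℝ) : Prop :=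
  ∀ α : Fin m → ℕ, (∫ x : Fin m → ℝ, (∏ i, x i ^ α i) * θ x) = 0

namespace SchwartzMap

open scoped ContDiff SchwartzMap BoundedContinuousFunction

universe u

theorem one_add_norm_le_mul {E : Type*} [SeminormedAddCommGroup E] (x y : E) :
    1 + ‖y‖ ≤ (1 + ‖x‖) * (1 + ‖y - x‖) := by
  have h : ‖y‖ ≤ ‖x‖ + ‖y - x‖ := by simpa using norm_add_le x (y - x)
  nlinarith [norm_nonneg x, norm_nonneg (y - x), mul_nonneg (norm_nonneg x) (norm_nonneg (y - x))]

section SmoothingIntegral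

variable {E F : Type u} [NormedAddCommGroup E] [NormedSpace ℝ E]
  [NormedAddCommGroup F] [NormedSpace ℝ F]

/-- A finite maximum of Schwartz seminorms, dominating all seminorms of index at most `(k, l)`. -/
def supSeminorm (k l : ℕ) : Seminorm ℝ 𝓢(E, F) :=
  (Finset.Iic (k, l)).sup (schwartzSeminormFamily ℝ E F)

theorem one_add_pow_mul_le_supSeminorm (k l : ℕ) (κ : 𝓢(E, F)) (x : E) :
    (1 + ‖x‖) ^ k * ‖iteratedFDeriv ℝ l κ x‖ ≤ 2 ^ k * supSeminorm k l κ :=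
  one_add_le_sup_seminorm_apply (𝕜 := ℝ) (m := (k, l)) le_rfl le_rfl κ x

theorem one_add_pow_mul_iteratedFDeriv_sub_le (k l : ℕ) (κ : 𝓢(E, F)) (x y : E) :
    (1 + ‖y‖) ^ k * ‖iteratedFDeriv ℝ l κ (y - x)‖ ≤
      (1 + ‖x‖) ^ k * (2 ^ k * supSeminorm k l κ) := by
  calc (1 + ‖y‖) ^ k * ‖iteratedFDeriv ℝ l κ (y - x)‖
      ≤ ((1 + ‖x‖) * (1 + ‖y - x‖)) ^ k * ‖iteratedFDeriv ℝ l κ (y - x)‖ := by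
        gcongr; exact one_add_norm_le_mul x y
    _ = (1 + ‖x‖) ^ k * ((1 + ‖y - x‖) ^ k * ‖iteratedFDeriv ℝ l κ (y - x)‖) := by
        rw [mul_pow, mul_assoc]
    _ ≤ _ := mul_le_mul_of_nonneg_left (one_add_pow_mul_le_supSeminorm k l κ (y - x))
        (by positivity)

variable [MeasurableSpace E] [BorelSpace E] [SecondCountableTopology E] {μ : Measure E} {h : E → ℝ}

theorem aestronglyMeasurable_iteratedFDeriv_sub (l : ℕ) (κ : 𝓢(E, F)) (y : E) :
    AEStronglyMeasurable (fun x => iteratedFDeriv ℝ l κ (y - x)) μ := by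
  have hc : Continuous (iteratedFDeriv ℝ l κ) :=
    (κ.smooth ⊤).continuous_iteratedFDeriv (mod_cast le_top)
  exact (hc.comp (continuous_const.sub continuous_id)).aestronglyMeasurable

theorem integrable_smul_iteratedFDeriv_sub (hh : Integrable h μ) (l : ℕ) (κ : 𝓢(E, F)) (y : E) :
    Integrable (fun x => h x • iteratedFDeriv ℝ l κ (y - x)) μ :=
  hh.smul_bdd _ (aestronglyMeasurable_iteratedFDeriv_sub l κ y)
    (Eventually.of_forall fun x => norm_iteratedFDeriv_le_seminorm ℝ κ l (y - x))

theorem integrable_smul_comp_sub (hh : Integrable h μ) (κ : 𝓢(E, F)) (y : E) :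
    Integrable (fun x => h x • κ (y - x)) μ :=
  hh.smul_bdd _ (κ.continuous.comp (continuous_const.sub continuous_id)).aestronglyMeasurable
    (Eventually.of_forall fun x => norm_le_seminorm ℝ κ (y - x))

theorem hasFDerivAt_integral_smul_comp_sub (hh : Integrable h μ) (κ : 𝓢(E, F)) (y : E) :
    HasFDerivAt (fun y => ∫ x, h x • κ (y - x) ∂μ)
      (∫ x, h x • fderivCLM ℝ E F κ (y - x) ∂μ) y := by
  refine hasFDerivAt_integral_of_dominated_of_fderiv_le
    (F' := fun y x => h x • fderivCLM ℝ E F κ (y - x))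
    (bound := fun x => ‖h x‖ * SchwartzMap.seminorm ℝ 0 0 (fderivCLM ℝ E F κ))
    univ_mem (Eventually.of_forall fun y => (integrable_smul_comp_sub hh κ y).1)
    (integrable_smul_comp_sub hh κ y) (integrable_smul_comp_sub hh (fderivCLM ℝ E F κ) y).1
    (Eventually.of_forall fun x y _ => ?_) (hh.norm.mul_const _)
    (Eventually.of_forall fun x y _ => ?_)
  · rw [norm_smul]
    gcongr
    exact norm_le_seminorm ℝ _ _
  · have := (κ.hasFDerivAt (y - x)).comp y ((hasFDerivAt_id y).sub_const x)
    simpa [Function.comp_def] using this.fun_const_smul (h x)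

theorem contDiff_integral_smul_comp_sub (hh : Integrable h μ) (κ : 𝓢(E, F)) :
    ContDiff ℝ ∞ (fun y => ∫ x, h x • κ (y - x) ∂μ) := by
  rw [contDiff_infty]
  intro l
  have main : ∀ (l : ℕ) (G : Type u) [NormedAddCommGroup G] [NormedSpace ℝ G] (κ : 𝓢(E, G)),
      ContDiff ℝ l (fun y => ∫ x, h x • κ (y - x) ∂μ) := by
    intro l
    induction l with
    | zero =>
      intro G _ _ κ
      exact contDiff_zero.2 (continuous_iff_continuousAt.2 fun y =>
        (hasFDerivAt_integral_smul_comp_sub hh κ y).continuousAt)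
    | succ l ih =>
      intro G _ _ κ
      refine (contDiff_succ_iff_hasFDerivAt (n := (l : ℕ))).2
        ⟨_, ih _ (fderivCLM ℝ E G κ), hasFDerivAt_integral_smul_comp_sub hh κ⟩
  exact main l F κ

theorem iteratedFDeriv_integral_smul_comp_sub (hh : Integrable h μ) (l : ℕ) (κ : 𝓢(E, F)) (y : E) :
    iteratedFDeriv ℝ l (fun y => ∫ x, h x • κ (y - x) ∂μ) y =
      ∫ x, h x • iteratedFDeriv ℝ l κ (y - x) ∂μ := by
  have main : ∀ (l : ℕ) (G : Type u) [NormedAddCommGroup G] [NormedSpace ℝ G] (κ : 𝓢(E, G)) (y : E),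
      iteratedFDeriv ℝ l (fun y => ∫ x, h x • κ (y - x) ∂μ) y =
        ∫ x, h x • iteratedFDeriv ℝ l κ (y - x) ∂μ := by
    intro l
    induction l with
    | zero =>
      intro G _ _ κ y
      have := (continuousMultilinearCurryFin0 ℝ E
        G).symm.toContinuousLinearEquiv.integral_comp_comm (fun x => h x • κ (y - x)) (μ := μ)
      simp only [iteratedFDeriv_zero_eq_comp, Function.comp_apply]
      simp only [map_smul] at this
      exact this.symm
    | succ l ih =>
      intro G _ _ κ y
      have hfd : fderiv ℝ (fun y => ∫ x, h x • κ (y - x) ∂μ) =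
          fun y => ∫ x, h x • fderivCLM ℝ E G κ (y - x) ∂μ :=
        funext fun y => (hasFDerivAt_integral_smul_comp_sub hh κ y).fderiv
      have := (continuousMultilinearCurryRightEquiv' ℝ l E
        G).symm.toContinuousLinearEquiv.integral_comp_comm
        (fun x => h x • iteratedFDeriv ℝ l (fderivCLM ℝ E G κ) (y - x)) (μ := μ)
      simp only [iteratedFDeriv_succ_eq_comp_right, Function.comp_apply, hfd, ih]
      simp only [map_smul] at this
      exact this.symm
  exact main l F κ y

theorem one_add_pow_mul_iteratedFDeriv_integral_le
    (hh : ∀ k : ℕ, Integrable (fun x => (1 + ‖x‖) ^ k * h x) μ) (k l : ℕ) (κ : 𝓢(E, F)) (y : E) :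
    (1 + ‖y‖) ^ k * ‖iteratedFDeriv ℝ l (fun y => ∫ x, h x • κ (y - x) ∂μ) y‖ ≤
      (∫ x, (1 + ‖x‖) ^ k * |h x| ∂μ) * (2 ^ k * supSeminorm k l κ) := by
  have h0 : Integrable h μ := by simpa using hh 0
  have hk : Integrable (fun x => (1 + ‖x‖) ^ k * |h x|) μ := by
    refine (hh k).norm.congr (Eventually.of_forall fun x => ?_)
    simp only [norm_mul, Real.norm_eq_abs]
    rw [abs_of_nonneg (a := (1 + ‖x‖) ^ k) (by positivity)]
  rw [iteratedFDeriv_integral_smul_comp_sub h0, ← integral_mul_const]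
  calc (1 + ‖y‖) ^ k * ‖∫ x, h x • iteratedFDeriv ℝ l κ (y - x) ∂μ‖
      ≤ (1 + ‖y‖) ^ k * ∫ x, ‖h x • iteratedFDeriv ℝ l κ (y - x)‖ ∂μ := by
        gcongr; exact norm_integral_le_integral_norm _
    _ = ∫ x, (1 + ‖y‖) ^ k * ‖h x • iteratedFDeriv ℝ l κ (y - x)‖ ∂μ :=
        (integral_const_mul _ _).symm
    _ ≤ _ := by
        refine integral_mono ((integrable_smul_iteratedFDeriv_sub h0 l κ y).norm.const_mul _)
          (hk.mul_const _) fun x => ?_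
        have := one_add_pow_mul_iteratedFDeriv_sub_le k l κ x y
        simp only [norm_smul, Real.norm_eq_abs]
        nlinarith [abs_nonneg (h x)]

/-- The Schwartz function `y ↦ ∫ h(x) κ(y - x) dμ(x)` for a rapidly decreasing weight `h`. -/
def smoothingIntegral (hh : ∀ k : ℕ, Integrable (fun x => (1 + ‖x‖) ^ k * h x) μ) (κ : 𝓢(E, F)) :
    𝓢(E, F) where
  toFun y := ∫ x, h x • κ (y - x) ∂μ
  smooth' := contDiff_integral_smul_comp_sub (by simpa using hh 0) κ
  decay' k l := ⟨_, fun y => le_trans (by gcongr; simp)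
    (one_add_pow_mul_iteratedFDeriv_integral_le hh k l κ y)⟩

@[simp]
theorem smoothingIntegral_apply (hh : ∀ k : ℕ, Integrable (fun x => (1 + ‖x‖) ^ k * h x) μ)
    (κ : 𝓢(E, F)) (y : E) : smoothingIntegral hh κ y = ∫ x, h x • κ (y - x) ∂μ := rfl

theorem seminorm_smoothingIntegral_le
    (hh : ∀ k : ℕ, Integrable (fun x => (1 + ‖x‖) ^ k * h x) μ) (k l : ℕ) (κ : 𝓢(E, F)) :
    SchwartzMap.seminorm ℝ k l (smoothingIntegral hh κ) ≤
      (∫ x, (1 + ‖x‖) ^ k * |h x| ∂μ) * (2 ^ k * supSeminorm k l κ) := by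
  refine seminorm_le_bound ℝ k l _ ?_ fun y => le_trans ?_
    (one_add_pow_mul_iteratedFDeriv_integral_le hh k l κ y)
  swap
  · change _ * ‖iteratedFDeriv ℝ l (fun y => ∫ x, h x • κ (y - x) ∂μ) y‖ ≤ _
    gcongr
    simp
  exact mul_nonneg (integral_nonneg fun x => by positivity) (by positivity)

end SmoothingIntegral

section Translation

variable {E F : Type*} [NormedAddCommGroup E] [NormedSpace ℝ E]
  [NormedAddCommGroup F] [NormedSpace ℝ F]

theorem iteratedFDeriv_compSubConstCLM (l : ℕ) (κ : 𝓢(E, F)) (x y : E) :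
    iteratedFDeriv ℝ l (κ.compSubConstCLM ℝ x) y = iteratedFDeriv ℝ l κ (y - x) :=
  iteratedFDeriv_comp_sub l x y

end Translation

/-- Bounded continuous functions with values in a normed group. -/
abbrev BoundedFunctions (X G : Type*) [TopologicalSpace X] [NormedAddCommGroup G] : Type _ := X →ᵇ G

section Pairing

variable {E F : Type u} [NormedAddCommGroup E] [NormedSpace ℝ E]
  [NormedAddCommGroup F] [NormedSpace ℝ F]

theorem seminorm_compSubConstCLM_sub_le (k l : ℕ) (κ : 𝓢(E, F)) {x : E} (hx : ‖x‖ ≤ 1) :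
    SchwartzMap.seminorm ℝ k l (κ.compSubConstCLM ℝ x - κ) ≤
      2 ^ k * (2 ^ k * supSeminorm k (l + 1) κ) * ‖x‖ := by
  refine seminorm_le_bound ℝ k l _ (by positivity) fun y => ?_
  have hG : ContDiff ℝ ∞ (iteratedFDeriv ℝ l κ) :=
    (κ.smooth ⊤).iteratedFDeriv_right (mod_cast le_top)
  have hsub : iteratedFDeriv ℝ l (κ.compSubConstCLM ℝ x - κ) y =
      iteratedFDeriv ℝ l κ (y - x) - iteratedFDeriv ℝ l κ y := by
    rw [← iteratedFDeriv_compSubConstCLM]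
    exact iteratedFDeriv_sub_apply ((smooth _ ⊤).contDiffAt.of_le (mod_cast le_top))
      ((smooth _ ⊤).contDiffAt.of_le (mod_cast le_top))
  have hbound : ∀ z ∈ Metric.closedBall y ‖x‖, ‖fderiv ℝ (iteratedFDeriv ℝ l κ) z‖ ≤
      2 ^ k * (2 ^ k * supSeminorm k (l + 1) κ) / (1 + ‖y‖) ^ k := by
    intro z hz
    have hyz : ‖y - z‖ ≤ 1 := by
      rw [← dist_eq_norm, dist_comm]; exact (Metric.mem_closedBall.1 hz).trans hx
    rw [norm_fderiv_iteratedFDeriv, le_div_iff₀ (by positivity), mul_comm]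
    have h := one_add_pow_mul_iteratedFDeriv_sub_le k (l + 1) κ (y - z) y
    rw [sub_sub_cancel] at h
    refine h.trans ?_
    gcongr
    linarith
  have hmv := (convex_closedBall y ‖x‖).norm_image_sub_le_of_norm_fderiv_le
    (fun z _ => (hG.differentiable (by simp)).differentiableAt) hbound
    (Metric.mem_closedBall_self (norm_nonneg x))
    (show y - x ∈ Metric.closedBall y ‖x‖ by simp [Metric.mem_closedBall])
  rw [hsub]
  calc ‖y‖ ^ k * ‖iteratedFDeriv ℝ l κ (y - x) - iteratedFDeriv ℝ l κ y‖
      ≤ (1 + ‖y‖) ^ k *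
        (2 ^ k * (2 ^ k * supSeminorm k (l + 1) κ) / (1 + ‖y‖) ^ k * ‖x‖) := by
        gcongr
        · simp
        · simpa using hmv
    _ = _ := by field_simp

theorem continuous_compSubConstCLM (κ : 𝓢(E, F)) :
    Continuous fun x : E => κ.compSubConstCLM ℝ x := by
  rw [continuous_iff_continuousAt]
  intro x₀
  rw [ContinuousAt, (schwartz_withSeminorms ℝ E F).tendsto_nhds]
  rintro ⟨k, l⟩ ε hε
  set C := 2 ^ k * (2 ^ k * supSeminorm k (l + 1) (κ.compSubConstCLM ℝ x₀))
  have hlim : Tendsto (fun x : E => C * ‖x - x₀‖) (𝓝 x₀) (𝓝 0) := by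
    have : Continuous fun x : E => C * ‖x - x₀‖ := by fun_prop
    simpa using this.tendsto x₀
  filter_upwards [hlim.eventually (gt_mem_nhds hε), Metric.closedBall_mem_nhds x₀ one_pos]
    with x hx hx1
  refine lt_of_le_of_lt ?_ hx
  have := seminorm_compSubConstCLM_sub_le k l (κ.compSubConstCLM ℝ x₀)
    (x := x - x₀) (by simpa [dist_eq_norm] using hx1)
  simpa using this

variable (E F) in
/-- The embedding `u ↦ ‖y‖ ^ k • D^l u(y)` of Schwartz functions into bounded continuous
functions, whose norm is controlled by the `(k, l)`-th seminorm. -/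
def weightedDerivCLM (k l : ℕ) : 𝓢(E, F) →L[ℝ] BoundedFunctions E (E [×l]→L[ℝ] F) :=
  mkCLMtoNormedSpace (D := E) (E := F) (G := BoundedFunctions E (E [×l]→L[ℝ] F)) (σ := RingHom.id ℝ)
    (fun u => BoundedContinuousFunction.ofNormedAddCommGroup
      (fun y => ‖y‖ ^ k • iteratedFDeriv ℝ l u y)
      ((continuous_norm.pow k).smul ((u.smooth ⊤).continuous_iteratedFDeriv (mod_cast le_top)))
      (SchwartzMap.seminorm ℝ k l u)
      (fun y => by simpa [norm_smul] using le_seminorm ℝ k l u y))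
    (fun u v => by
      ext1 y
      have : iteratedFDeriv ℝ l (⇑u + ⇑v) y = iteratedFDeriv ℝ l u y + iteratedFDeriv ℝ l v y :=
        iteratedFDeriv_add_apply ((smooth _ ⊤).contDiffAt.of_le (mod_cast le_top))
          ((smooth _ ⊤).contDiffAt.of_le (mod_cast le_top))
      simp [this])
    (fun c u => by
      ext1 y
      have : iteratedFDeriv ℝ l (c • ⇑u) y = c • iteratedFDeriv ℝ l u y :=
        iteratedFDeriv_const_smul_apply ((smooth _ ⊤).contDiffAt.of_le (mod_cast le_top))
      simp [this, smul_comm c])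
    ⟨{(k, l)}, 1, zero_le_one, fun u => by
      simpa using BoundedContinuousFunction.norm_ofNormedAddCommGroup_le _ (apply_nonneg _ _) _⟩

@[simp]
theorem weightedDerivCLM_apply (k l : ℕ) (u : 𝓢(E, F)) (y : E) :
    weightedDerivCLM E F k l u y = ‖y‖ ^ k • iteratedFDeriv ℝ l u y := rfl

theorem seminorm_le_norm_weightedDerivCLM (k l : ℕ) (u : 𝓢(E, F)) :
    SchwartzMap.seminorm ℝ k l u ≤ ‖weightedDerivCLM E F k l u‖ :=
  seminorm_le_bound ℝ k l u (norm_nonneg _) fun y => by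
    simpa [norm_smul] using (weightedDerivCLM E F k l u).norm_coe_le_norm y

theorem norm_weightedDerivCLM_compSubConstCLM_le (k l : ℕ) (κ : 𝓢(E, F)) (x : E) :
    ‖weightedDerivCLM E F k l (κ.compSubConstCLM ℝ x)‖ ≤
      (1 + ‖x‖) ^ k * (2 ^ k * supSeminorm k l κ) := by
  refine (BoundedContinuousFunction.norm_le (by positivity)).2 fun y => ?_
  refine le_trans ?_ (one_add_pow_mul_iteratedFDeriv_sub_le k l κ x y)
  rw [weightedDerivCLM_apply, iteratedFDeriv_compSubConstCLM, norm_smul, norm_pow, norm_norm]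
  gcongr
  simp

/-- A tempered distribution factors through finitely many weighted derivatives. -/
theorem exists_dual_comp_weightedDerivCLM (f : 𝓢(E, F) →L[ℝ] ℝ) :
    ∃ (s : Finset (ℕ × ℕ)) (g : (i : s) → (BoundedFunctions E (E [×i.1.2]→L[ℝ] F) →L[ℝ] ℝ)),
      ∀ u, f u = ∑ i : s, g i (weightedDerivCLM E F i.1.1 i.1.2 u) := by
  obtain ⟨s, C, -, hfC⟩ := Seminorm.bound_of_continuous (schwartz_withSeminorms ℝ E F)
    ((normSeminorm ℝ ℝ).comp f.toLinearMap) (continuous_norm.comp f.continuous)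
  let J : 𝓢(E, F) →L[ℝ] ((i : s) → BoundedFunctions E (E [×i.1.2]→L[ℝ] F)) :=
    ContinuousLinearMap.pi fun i => weightedDerivCLM E F i.1.1 i.1.2
  have hf : ∀ u, ‖f u‖ ≤ C * ‖J u‖ := by
    intro u
    refine (hfC u).trans ?_
    change C * (s.sup (schwartzSeminormFamily ℝ E F)) u ≤ _
    gcongr
    refine Seminorm.finset_sup_apply_le (norm_nonneg _) fun i hi => ?_
    exact (seminorm_le_norm_weightedDerivCLM i.1 i.2 u).trans
      (norm_le_pi_norm (J u) (⟨i, hi⟩ : s))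
  have hker : LinearMap.ker J.toLinearMap ≤ LinearMap.ker f.toLinearMap := by
    intro u hu
    have hu' : J u = 0 := hu
    have := hf u
    rw [hu', norm_zero, mul_zero] at this
    exact norm_le_zero_iff.1 this
  let g₀ : LinearMap.range J.toLinearMap →ₗ[ℝ] ℝ :=
    (LinearMap.ker J.toLinearMap).liftQ f.toLinearMap hker ∘ₗ
      J.toLinearMap.quotKerEquivRange.symm.toLinearMap
  have hg₀ : ∀ u, g₀ ⟨J u, u, rfl⟩ = f u := by
    intro u
    have : J.toLinearMap.quotKerEquivRange.symm ⟨J u, u, rfl⟩ = Submodule.Quotient.mk u := by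
      rw [LinearEquiv.symm_apply_eq]; rfl
    simp only [g₀, LinearMap.comp_apply, LinearEquiv.coe_coe, this]
    rfl
  let g₁ : StrongDual ℝ (LinearMap.range J.toLinearMap) := g₀.mkContinuous C (by
    rintro ⟨_, u, rfl⟩
    exact (congrArg norm (hg₀ u)).le.trans (hf u))
  obtain ⟨g, hg, -⟩ := exists_extension_norm_eq _ g₁
  refine ⟨s, fun i => g.comp (ContinuousLinearMap.single ℝ
    (fun i : s => BoundedFunctions E (E [×i.1.2]→L[ℝ] F)) i), fun u => ?_⟩
  have h1 : g (J u) = f u := (hg ⟨J u, u, rfl⟩).trans (hg₀ u)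
  rw [← h1]
  conv_lhs => rw [← Finset.univ_sum_single (J u), map_sum]
  rfl

variable [MeasurableSpace E] [BorelSpace E] [SecondCountableTopology E] {μ : Measure E} {h : E → ℝ}

theorem integrable_smul_weightedDerivCLM
    (hh : ∀ k : ℕ, Integrable (fun x => (1 + ‖x‖) ^ k * h x) μ) (k l : ℕ) (κ : 𝓢(E, F)) :
    Integrable (fun x => h x • weightedDerivCLM E F k l (κ.compSubConstCLM ℝ x)) μ := by
  have h0 : Integrable h μ := by simpa using hh 0
  refine ((hh k).norm.mul_const (2 ^ k * supSeminorm k l κ)).mono'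
    (h0.1.smul ((weightedDerivCLM E F k l).continuous.comp
      (continuous_compSubConstCLM κ)).aestronglyMeasurable) (Eventually.of_forall fun x => ?_)
  have := norm_weightedDerivCLM_compSubConstCLM_le k l κ x
  rw [norm_smul, norm_mul, norm_pow, Real.norm_of_nonneg (r := 1 + ‖x‖) (by positivity)]
  nlinarith [norm_nonneg (h x)]

theorem weightedDerivCLM_smoothingIntegral [CompleteSpace F]
    (hh : ∀ k : ℕ, Integrable (fun x => (1 + ‖x‖) ^ k * h x) μ) (k l : ℕ) (κ : 𝓢(E, F)) :
    weightedDerivCLM E F k l (smoothingIntegral hh κ) =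
      ∫ x, h x • weightedDerivCLM E F k l (κ.compSubConstCLM ℝ x) ∂μ := by
  ext1 y
  have := (BoundedContinuousFunction.evalCLM ℝ y).integral_comp_comm
    (integrable_smul_weightedDerivCLM hh k l κ)
  change _ = BoundedContinuousFunction.evalCLM ℝ y _
  rw [← this, weightedDerivCLM_apply]
  change ‖y‖ ^ k • iteratedFDeriv ℝ l (fun y => ∫ x, h x • κ (y - x) ∂μ) y = _
  rw [iteratedFDeriv_integral_smul_comp_sub (by simpa using hh 0), ← integral_smul]
  refine integral_congr_ae (Eventually.of_forall fun x => ?_)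
  change _ = h x • (‖y‖ ^ k • iteratedFDeriv ℝ l (κ.compSubConstCLM ℝ x) y)
  rw [iteratedFDeriv_compSubConstCLM, smul_comm]

theorem map_smoothingIntegral [CompleteSpace F]
    (hh : ∀ k : ℕ, Integrable (fun x => (1 + ‖x‖) ^ k * h x) μ) (κ : 𝓢(E, F))
    (f : 𝓢(E, F) →L[ℝ] ℝ) :
    f (smoothingIntegral hh κ) = ∫ x, h x * f (κ.compSubConstCLM ℝ x) ∂μ := by
  obtain ⟨s, g, hg⟩ := exists_dual_comp_weightedDerivCLM f
  have hint : ∀ i : s, Integrable (fun x => g i (h x • weightedDerivCLM E F i.1.1 i.1.2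
      (κ.compSubConstCLM ℝ x))) μ := fun i =>
    (g i).integrable_comp (integrable_smul_weightedDerivCLM hh _ _ κ)
  simp only [hg, weightedDerivCLM_smoothingIntegral]
  simp only [Finset.mul_sum]
  rw [integral_finsetSum _ fun i _ => by simpa using hint i]
  refine Finset.sum_congr rfl fun i _ => ?_
  rw [← (g i).integral_comp_comm (integrable_smul_weightedDerivCLM hh _ _ κ)]
  simp

end Pairing

section Taylor

open scoped Nat

variable {E F : Type*} [NormedAddCommGroup E] [NormedSpace ℝ E]
  [NormedAddCommGroup F] [NormedSpace ℝ F]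

theorem iteratedDeriv_comp_add_smul {f : E → F} (hf : ContDiff ℝ ∞ f) (x v : E) (m : ℕ) (t : ℝ) :
    iteratedDeriv m (fun t : ℝ => f (x + t • v)) t =
      iteratedFDeriv ℝ m f (x + t • v) fun _ => v := by
  induction m generalizing t with
  | zero => simp
  | succ m ih =>
    rw [iteratedDeriv_succ, funext ih]
    have h1 : HasFDerivAt (iteratedFDeriv ℝ m f) (fderiv ℝ (iteratedFDeriv ℝ m f) (x + t • v))
        (x + t • v) :=
      ((hf.iteratedFDeriv_right (m := 1) (mod_cast le_top)).differentiable
        one_ne_zero).differentiableAt.hasFDerivAt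
    have h2 : HasDerivAt (fun t : ℝ => x + t • v) v t := by
      simpa using ((hasDerivAt_id t).smul_const v).const_add x
    have h3 := h1.comp_hasDerivAt t h2
    have h4 := ((ContinuousMultilinearMap.apply ℝ (fun _ : Fin m => E) F
      (fun _ => v)).hasFDerivAt).comp_hasDerivAt t h3
    refine h4.deriv.trans ?_
    simp [iteratedFDeriv_succ_apply_left]
    rfl

theorem norm_sub_taylor_le {f : E → F} (hf : ContDiff ℝ ∞ f) (x v : E) (M : ℕ) {C : ℝ}
    (hC : ∀ t ∈ Set.Icc (0 : ℝ) 1, ‖iteratedFDeriv ℝ (M + 1) f (x + t • v)‖ ≤ C) :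
    ‖f (x + v) - ∑ m ∈ Finset.range (M + 1), (m ! : ℝ)⁻¹ • iteratedFDeriv ℝ m f x fun _ => v‖ ≤
      C * ‖v‖ ^ (M + 1) := by
  have hg : ContDiff ℝ ∞ fun t : ℝ => f (x + t • v) := by fun_prop
  have hwithin : ∀ m : ℕ, ∀ t ∈ Set.Icc (0 : ℝ) 1,
      iteratedDerivWithin m (fun t : ℝ => f (x + t • v)) (Set.Icc 0 1) t =
        iteratedFDeriv ℝ m f (x + t • v) fun _ => v := fun m t ht => by
    rw [iteratedDerivWithin_eq_iteratedDeriv (uniqueDiffOn_Icc zero_lt_one)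
      (hg.contDiffAt.of_le (mod_cast le_top)) ht, iteratedDeriv_comp_add_smul hf]
  have hC0 : 0 ≤ C := (norm_nonneg _).trans (hC 0 (by simp))
  have := taylor_mean_remainder_bound (f := fun t : ℝ => f (x + t • v)) (a := 0) (b := 1)
    (x := 1) (n := M) (C := C * ‖v‖ ^ (M + 1)) zero_le_one
    (hg.contDiffOn.of_le (mod_cast le_top)) (by simp) (fun t ht => by
      rw [hwithin _ t ht]
      refine (ContinuousMultilinearMap.le_opNorm _ _).trans ?_
      simp only [Finset.prod_const, Finset.card_univ, Fintype.card_fin]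
      gcongr
      exact hC t ht)
  rw [taylor_within_apply] at this
  simp only [hwithin _ 0 (by simp), one_smul, zero_smul, add_zero, sub_zero, one_pow,
    mul_one] at this
  refine this.trans (div_le_self (by positivity) ?_)
  exact_mod_cast Nat.one_le_iff_ne_zero.2 (Nat.factorial_ne_zero M)

end Taylor

section Moments

open scoped Nat

variable {d : ℕ}

theorem integrable_one_add_pow_mul (θ : 𝓢(Fin d → ℝ, ℝ)) (k : ℕ) :
    Integrable fun w => (1 + ‖w‖) ^ k * θ w := by
  have hc : Continuous fun w : Fin d → ℝ => (1 + ‖w‖) ^ k * θ w := by fun_prop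
  refine (((θ.integrable.norm).add (θ.integrable_pow_mul volume k)).const_mul (2 ^ k)).mono'
    hc.aestronglyMeasurable (Eventually.of_forall fun w => ?_)
  simp only [Pi.add_apply]
  rw [norm_mul, norm_pow, Real.norm_of_nonneg (r := 1 + ‖w‖) (by positivity)]
  have h : (1 + ‖w‖) ^ k ≤ 2 ^ k * (1 + ‖w‖ ^ k) := by
    have := add_pow_le zero_le_one (norm_nonneg w) k
    rw [one_pow] at this
    refine this.trans ?_
    gcongr
    · norm_num
    · omega
  nlinarith [norm_nonneg (θ w)]

theorem integrable_mul_of_le_one_add_pow (θ : 𝓢(Fin d → ℝ, ℝ)) {g : (Fin d → ℝ) → ℝ}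
    (hg : Continuous g) {C : ℝ} {k : ℕ} (hgC : ∀ w, |g w| ≤ C * (1 + ‖w‖) ^ k) :
    Integrable fun w => θ w * g w := by
  refine ((integrable_one_add_pow_mul θ k).norm.const_mul C).mono'
    (θ.continuous.mul hg).aestronglyMeasurable (Eventually.of_forall fun w => ?_)
  rw [norm_mul, norm_mul, norm_pow, Real.norm_of_nonneg (r := 1 + ‖w‖) (by positivity)]
  have := hgC w
  rw [← Real.norm_eq_abs] at this
  nlinarith [norm_nonneg (θ w)]

theorem integrable_mul_multilinear (θ : 𝓢(Fin d → ℝ, ℝ)) {m : ℕ} (A : (Fin d → ℝ) [×m]→L[ℝ] ℝ) :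
    Integrable fun w => θ w * A fun _ => w := by
  refine integrable_mul_of_le_one_add_pow θ (by fun_prop) (C := ‖A‖) (k := m) fun w => ?_
  refine (A.le_opNorm _).trans ?_
  simp only [Finset.prod_const, Finset.card_univ, Fintype.card_fin]
  gcongr
  simp

theorem integral_mul_multilinear_eq_zero (θ : 𝓢(Fin d → ℝ, ℝ)) (hθ : VanishingMoments θ) {m : ℕ}
    (A : (Fin d → ℝ) [×m]→L[ℝ] ℝ) : ∫ w, θ w * A (fun _ => w) = 0 := by
  have hexp : ∀ w : Fin d → ℝ, θ w * A (fun _ => w) = ∑ r : Fin m → Fin d,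
      A (fun i => Pi.single (r i) 1) *
        ((∏ k, w k ^ (Finset.univ.filter fun i => r i = k).card) * θ w) := by
    intro w
    have hw : (fun _ : Fin m => w) = fun _ => ∑ k, w k • (Pi.single k (1 : ℝ) : Fin d → ℝ) :=
      funext fun _ => by
        ext j
        simp [Finset.sum_apply, Pi.single_apply]
    conv_lhs => rw [hw, A.map_sum]
    rw [Finset.mul_sum]
    refine Finset.sum_congr rfl fun r _ => ?_
    rw [A.map_smul_univ, smul_eq_mul]
    have : ∏ i, w (r i) = ∏ k, w k ^ (Finset.univ.filter fun i => r i = k).card := by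
      rw [← Finset.prod_fiberwise Finset.univ r (fun i => w (r i))]
      refine Finset.prod_congr rfl fun k _ => ?_
      rw [Finset.prod_congr rfl fun i hi => by rw [(Finset.mem_filter.1 hi).2], Finset.prod_const]
    rw [this]
    ring
  have hint : ∀ r : Fin m → Fin d, Integrable fun w : Fin d → ℝ => A (fun i => Pi.single (r i) 1) *
        ((∏ k, w k ^ (Finset.univ.filter fun i => r i = k).card) * θ w) := by
    intro r
    refine Integrable.const_mul ?_ _
    have h := integrable_mul_of_le_one_add_pow θ
      (g := fun w => ∏ k, w k ^ (Finset.univ.filter fun i => r i = k).card)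
      (by fun_prop) (C := 1) (k := ∑ k, (Finset.univ.filter fun i => r i = k).card) fun w => by
        rw [Finset.abs_prod, one_mul, ← Finset.prod_pow_eq_pow_sum]
        gcongr with k _
        rw [abs_pow]
        gcongr
        exact (norm_le_pi_norm w k).trans (by simp)
    simpa only [mul_comm] using h
  simp only [hexp]
  rw [integral_finsetSum _ fun r _ => hint r]
  refine Finset.sum_eq_zero fun r _ => ?_
  rw [integral_const_mul, hθ, mul_zero]

theorem one_add_pow_mul_integral_le (N : ℕ) (θ η : 𝓢(Fin d → ℝ, ℝ)) (x : Fin d → ℝ) :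
    (1 + ‖x‖) ^ N * |∫ w, θ w * η (x + w)| ≤
      (∫ w, (1 + ‖w‖) ^ N * |θ w|) * (2 ^ N * supSeminorm N 0 η) := by
  have hpt : ∀ w, (1 + ‖x‖) ^ N * |η (x + w)| ≤ (1 + ‖w‖) ^ N * (2 ^ N * supSeminorm N 0 η) := by
    intro w
    simpa using one_add_pow_mul_iteratedFDeriv_sub_le N 0 η (-w) x
  have hint : Integrable fun w => (1 + ‖w‖) ^ N * |θ w| := by
    refine (integrable_one_add_pow_mul θ N).norm.congr (Eventually.of_forall fun w => ?_)
    simp only [norm_mul, norm_pow, Real.norm_eq_abs]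
    rw [abs_of_nonneg (a := 1 + ‖w‖) (by positivity)]
  rw [← integral_mul_const]
  calc (1 + ‖x‖) ^ N * |∫ w, θ w * η (x + w)|
      = ‖∫ w, (1 + ‖x‖) ^ N * (θ w * η (x + w))‖ := by
        rw [integral_const_mul, norm_mul, Real.norm_of_nonneg (by positivity), Real.norm_eq_abs]
    _ ≤ _ := by
        refine norm_integral_le_of_norm_le (hint.mul_const _) (Eventually.of_forall fun w => ?_)
        rw [norm_mul, norm_mul, Real.norm_of_nonneg (by positivity)]
        have := hpt w
        simp only [Real.norm_eq_abs]
        nlinarith [abs_nonneg (θ w)]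

theorem integrable_mul_comp_add (θ η : 𝓢(Fin d → ℝ, ℝ)) (L : (Fin d → ℝ) →L[ℝ] (Fin d → ℝ))
    (x : Fin d → ℝ) : Integrable fun w => θ w * η (x + L w) :=
  integrable_mul_of_le_one_add_pow θ (by fun_prop) (C := SchwartzMap.seminorm ℝ 0 0 η) (k := 0)
    fun w => by simpa using norm_le_seminorm ℝ η (x + L w)

theorem one_add_pow_mul_integral_comp_le (N M : ℕ) (θ : 𝓢(Fin d → ℝ, ℝ)) (hθ : VanishingMoments θ)
    (η : 𝓢(Fin d → ℝ, ℝ)) (L : (Fin d → ℝ) →L[ℝ] (Fin d → ℝ)) {r : ℝ} (hr0 : 0 ≤ r)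
    (hr : r ≤ 1) (hL : ∀ w, ‖L w‖ ≤ r * ‖w‖)
    (x : Fin d → ℝ) :
    (1 + ‖x‖) ^ N * |∫ w, θ w * η (x + L w)| ≤
      r ^ (M + 1) * (∫ w, (1 + ‖w‖) ^ (M + 1 + N) * |θ w|) * (2 ^ N * supSeminorm N (M + 1) η) := by
  set P : (Fin d → ℝ) → ℝ := fun w =>
    ∑ m ∈ Finset.range (M + 1), (m ! : ℝ)⁻¹ • iteratedFDeriv ℝ m η x fun _ => L w with hP
  have hLw : ∀ w, ‖L w‖ ≤ ‖w‖ := fun w => (hL w).trans (mul_le_of_le_one_left (norm_nonneg w) hr)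
  have hpt : ∀ w, (1 + ‖x‖) ^ N * |η (x + L w) - P w| ≤
      r ^ (M + 1) * (1 + ‖w‖) ^ (M + 1 + N) * (2 ^ N * supSeminorm N (M + 1) η) := by
    intro w
    have hC : ∀ t ∈ Set.Icc (0 : ℝ) 1, ‖iteratedFDeriv ℝ (M + 1) η (x + t • L w)‖ ≤
        (1 + ‖w‖) ^ N * (2 ^ N * supSeminorm N (M + 1) η) / (1 + ‖x‖) ^ N := by
      intro t ht
      rw [le_div_iff₀ (by positivity), mul_comm]
      have h := one_add_pow_mul_iteratedFDeriv_sub_le N (M + 1) η (-(t • L w)) x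
      rw [sub_neg_eq_add, norm_neg] at h
      refine h.trans ?_
      gcongr
      rw [norm_smul, Real.norm_of_nonneg ht.1]
      exact (mul_le_of_le_one_left (norm_nonneg _) ht.2).trans (hLw w)
    have h := norm_sub_taylor_le (η.smooth ⊤) x (L w) M hC
    rw [Real.norm_eq_abs] at h
    calc (1 + ‖x‖) ^ N * |η (x + L w) - P w|
        ≤ (1 + ‖x‖) ^ N * ((1 + ‖w‖) ^ N * (2 ^ N * supSeminorm N (M + 1) η) / (1 + ‖x‖) ^ N *
            ‖L w‖ ^ (M + 1)) := by gcongr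
      _ = (1 + ‖w‖) ^ N * (2 ^ N * supSeminorm N (M + 1) η) * ‖L w‖ ^ (M + 1) := by field_simp
      _ ≤ (1 + ‖w‖) ^ N * (2 ^ N * supSeminorm N (M + 1) η) * (r * (1 + ‖w‖)) ^ (M + 1) := by
          gcongr
          refine (hL w).trans ?_
          gcongr
          simp
      _ = _ := by rw [mul_pow, pow_add]; ring
  have hPint : ∀ m : ℕ, Integrable fun w => θ w * iteratedFDeriv ℝ m η x fun _ => L w := fun m =>
    integrable_mul_multilinear θ ((iteratedFDeriv ℝ m η x).compContinuousLinearMap fun _ => L)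
  have hP0 : ∀ m : ℕ, ∫ w, θ w * iteratedFDeriv ℝ m η x (fun _ => L w) = 0 := fun m =>
    integral_mul_multilinear_eq_zero θ hθ
      ((iteratedFDeriv ℝ m η x).compContinuousLinearMap fun _ => L)
  have hterm : ∀ m : ℕ, Integrable fun w =>
      (m ! : ℝ)⁻¹ * (θ w * iteratedFDeriv ℝ m η x fun _ => L w) := fun m => (hPint m).const_mul _
  have hPexp : (fun w => θ w * P w) = fun w => ∑ m ∈ Finset.range (M + 1),
      (m ! : ℝ)⁻¹ * (θ w * iteratedFDeriv ℝ m η x fun _ => L w) := by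
    funext w
    simp only [hP, Finset.mul_sum, smul_eq_mul]
    exact Finset.sum_congr rfl fun m _ => by ring
  have hPi : Integrable fun w => θ w * P w := by
    rw [hPexp]
    exact integrable_finsetSum _ fun m _ => hterm m
  have hPz : ∫ w, θ w * P w = 0 := by
    rw [hPexp, integral_finsetSum _ fun m _ => hterm m]
    exact Finset.sum_eq_zero fun m _ => by rw [integral_const_mul, hP0, mul_zero]
  have hηi := integrable_mul_comp_add θ η L x
  have hint : Integrable fun w => (1 + ‖w‖) ^ (M + 1 + N) * |θ w| := by
    refine (integrable_one_add_pow_mul θ (M + 1 + N)).norm.congr (Eventually.of_forall fun w => ?_)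
    simp only [norm_mul, norm_pow, Real.norm_eq_abs]
    rw [abs_of_nonneg (a := 1 + ‖w‖) (by positivity)]
  have heq : ∫ w, θ w * η (x + L w) = ∫ w, θ w * (η (x + L w) - P w) := by
    simp only [mul_sub]
    rw [integral_sub hηi hPi, hPz, sub_zero]
  rw [heq, ← integral_const_mul, ← integral_mul_const]
  calc (1 + ‖x‖) ^ N * |∫ w, θ w * (η (x + L w) - P w)|
      = ‖∫ w, (1 + ‖x‖) ^ N * (θ w * (η (x + L w) - P w))‖ := by
        rw [integral_const_mul, norm_mul, Real.norm_of_nonneg (by positivity), Real.norm_eq_abs]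
    _ ≤ _ := by
        refine norm_integral_le_of_norm_le ((hint.const_mul _).mul_const _)
          (Eventually.of_forall fun w => ?_)
        rw [norm_mul, norm_mul, Real.norm_of_nonneg (by positivity)]
        have := hpt w
        simp only [Real.norm_eq_abs]
        nlinarith [abs_nonneg (θ w)]

end Moments

section Series

variable {E F : Type*} [NormedAddCommGroup E] [NormedSpace ℝ E]
  [NormedAddCommGroup F] [NormedSpace ℝ F] [CompleteSpace F]

theorem exists_hasSum_of_summable_seminorm {ι : Type*} {u : ι → 𝓢(E, F)}
    (hu : ∀ k l : ℕ, Summable fun j => SchwartzMap.seminorm ℝ k l (u j)) :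
    ∃ s : 𝓢(E, F), HasSum u s ∧
      ∀ k l : ℕ, SchwartzMap.seminorm ℝ k l s ≤ ∑' j, SchwartzMap.seminorm ℝ k l (u j) := by
  have hsmooth : ∀ j, ContDiff ℝ ∞ (u j) := fun j => (u j).smooth ⊤
  have hbound : ∀ (l : ℕ) (j : ι) (x : E), ((l : ℕ∞) ≤ ⊤) →
      ‖iteratedFDeriv ℝ l (u j) x‖ ≤ SchwartzMap.seminorm ℝ 0 l (u j) :=
    fun l j x _ => norm_iteratedFDeriv_le_seminorm ℝ (u j) l x
  have key : ∀ (s : Set ι) (k l : ℕ) (x : E),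
      ‖x‖ ^ k * ‖∑' j : s, iteratedFDeriv ℝ l (u j) x‖ ≤
        ∑' j : s, SchwartzMap.seminorm ℝ k l (u j) := by
    intro s k l x
    have h1 : Summable fun j : s => ‖iteratedFDeriv ℝ l (u j) x‖ :=
      Summable.of_nonneg_of_le (fun _ => norm_nonneg _)
        (fun j => norm_iteratedFDeriv_le_seminorm ℝ (u j) l x) ((hu 0 l).subtype s)
    calc _ ≤ ‖x‖ ^ k * ∑' j : s, ‖iteratedFDeriv ℝ l (u j) x‖ := by
          gcongr; exact norm_tsum_le_tsum_norm h1
      _ = ∑' j : s, ‖x‖ ^ k * ‖iteratedFDeriv ℝ l (u j) x‖ := tsum_mul_left.symm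
      _ ≤ _ := (h1.mul_left _).tsum_le_tsum (fun j => le_seminorm ℝ k l (u j) x)
          ((hu k l).subtype s)
  have hderiv : ∀ (l : ℕ) (x : E), iteratedFDeriv ℝ l (fun y => ∑' j, u j y) x =
      ∑' j, iteratedFDeriv ℝ l (u j) x := fun l x =>
    iteratedFDeriv_tsum_apply (N := ⊤) hsmooth (fun l _ => hu 0 l) (fun l j x h => hbound l j x h)
      (mod_cast le_top) x
  have hfull : ∀ (k l : ℕ) (x : E), ‖x‖ ^ k * ‖iteratedFDeriv ℝ l (fun y => ∑' j, u j y) x‖ ≤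
      ∑' j, SchwartzMap.seminorm ℝ k l (u j) := fun k l x => by
    have := key Set.univ k l x
    rwa [tsum_univ (fun j => iteratedFDeriv ℝ l (u j) x),
      tsum_univ (fun j => SchwartzMap.seminorm ℝ k l (u j)), ← hderiv] at this
  let s : 𝓢(E, F) :=
    { toFun := fun y => ∑' j, u j y
      smooth' := contDiff_tsum (N := ⊤) hsmooth (fun l _ => hu 0 l) fun l j x h => hbound l j x h
      decay' := fun k l => ⟨_, hfull k l⟩ }
  refine ⟨s, ?_, fun k l => seminorm_le_bound ℝ k l s
    (tsum_nonneg fun _ => apply_nonneg _ _) (hfull k l)⟩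
  refine ((schwartz_withSeminorms ℝ E F).tendsto_nhds _ s).2 fun ⟨k, l⟩ ε hε => ?_
  have htail := (tendsto_order.1 (tendsto_tsum_compl_atTop_zero fun j =>
    SchwartzMap.seminorm ℝ k l (u j))).2 ε hε
  filter_upwards [htail] with t ht
  refine lt_of_le_of_lt ?_ ht
  rw [map_sub_rev]
  refine seminorm_le_bound ℝ k l _ (tsum_nonneg fun _ => apply_nonneg _ _) fun x => ?_
  have hsum : Summable fun j => iteratedFDeriv ℝ l (u j) x :=
    Summable.of_norm_bounded (hu 0 l) fun j => norm_iteratedFDeriv_le_seminorm ℝ (u j) l x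
  have hsub : iteratedFDeriv ℝ l (s - ∑ j ∈ t, u j) x =
      ∑' j : {j // j ∉ t}, iteratedFDeriv ℝ l (u j) x := by
    have h1 : iteratedFDeriv ℝ l (s - ∑ j ∈ t, u j) x =
        iteratedFDeriv ℝ l s x - iteratedFDeriv ℝ l (∑ j ∈ t, u j : 𝓢(E, F)) x :=
      iteratedFDeriv_sub_apply ((smooth _ ⊤).contDiffAt.of_le (mod_cast le_top))
        ((smooth _ ⊤).contDiffAt.of_le (mod_cast le_top))
    have h2 : iteratedFDeriv ℝ l (∑ j ∈ t, u j : 𝓢(E, F)) x =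
        ∑ j ∈ t, iteratedFDeriv ℝ l (u j) x := by
      have hc : ⇑(∑ j ∈ t, u j : 𝓢(E, F)) = fun y => ∑ j ∈ t, u j y := by
        ext y; simp
      rw [hc, iteratedFDeriv_sum fun j _ => (hsmooth j).of_le (mod_cast le_top)]
      simp
    have h3 : iteratedFDeriv ℝ l s x = ∑' j, iteratedFDeriv ℝ l (u j) x := hderiv l x
    rw [h1, h2, h3, ← hsum.sum_add_tsum_subtype_compl t, add_sub_cancel_left]
  rw [hsub]
  exact key {j | j ∉ t} k l x

/-- A geometrically convergent series of linear maps on Schwartz space sums to a continuous linear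
map. -/
theorem exists_clm_hasSum {A : ℕ → 𝓢(E, F) →ₗ[ℝ] 𝓢(E, F)}
    (hA : ∀ k l : ℕ, ∃ (s : Finset (ℕ × ℕ)) (C : ℝ), 0 ≤ C ∧ ∀ j η,
      SchwartzMap.seminorm ℝ k l (A j η) ≤
        C * (1 / 2) ^ j * s.sup (schwartzSeminormFamily ℝ E F) η) :
    ∃ T : 𝓢(E, F) →L[ℝ] 𝓢(E, F), ∀ η, HasSum (fun j => A j η) (T η) := by
  have hsummable : ∀ η k l, Summable fun j => SchwartzMap.seminorm ℝ k l (A j η) := by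
    intro η k l
    obtain ⟨s, C, -, h⟩ := hA k l
    exact Summable.of_nonneg_of_le (fun _ => apply_nonneg _ _) (fun j => h j η)
      ((summable_geometric_two.mul_left C).mul_right _)
  choose S hS hSle using fun η => exists_hasSum_of_summable_seminorm (hsummable η)
  let T : 𝓢(E, F) →ₗ[ℝ] 𝓢(E, F) :=
    { toFun := S
      map_add' := fun η ζ => (hS (η + ζ)).unique (by simpa using (hS η).add (hS ζ))
      map_smul' := fun c η => (hS (c • η)).unique (by simpa using (hS η).const_smul c) }
  refine ⟨⟨T, ?_⟩, hS⟩
  refine (schwartz_withSeminorms ℝ E F).continuous_of_isBounded (schwartz_withSeminorms ℝ E F) T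
    (Seminorm.IsBounded.of_real fun ⟨k, l⟩ => ?_)
  obtain ⟨s, C, hC, h⟩ := hA k l
  refine ⟨s, C * 2, fun η => (hSle η k l).trans ?_⟩
  refine ((hsummable η k l).tsum_le_tsum (fun j => h j η)
    ((summable_geometric_two.mul_left C).mul_right _)).trans ?_
  rw [tsum_mul_right, tsum_mul_left, tsum_geometric_two]
end Series

section Dilation

variable {d : ℕ}

/-- The diagonal scaling `x ↦ (c i * x i)`. -/
def diagScale (c : Fin d → ℝ) : (Fin d → ℝ) →L[ℝ] (Fin d → ℝ) :=
  ContinuousLinearMap.pi fun i => c i • ContinuousLinearMap.proj i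

@[simp]
theorem diagScale_apply (c x : Fin d → ℝ) (i : Fin d) : diagScale c x i = c i * x i := rfl

/-- The diagonal scaling by nonzero factors as a continuous linear equivalence. -/
def diagScaleEquiv (c : Fin d → ℝ) (hc : ∀ i, c i ≠ 0) : (Fin d → ℝ) ≃L[ℝ] (Fin d → ℝ) :=
  ContinuousLinearEquiv.equivOfInverse (diagScale c) (diagScale c⁻¹)
    (fun x => by ext i; simp [hc i]) (fun x => by ext i; simp [hc i])

@[simp]
theorem diagScaleEquiv_apply (c : Fin d → ℝ) (hc : ∀ i, c i ≠ 0) (x : Fin d → ℝ) :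
    diagScaleEquiv c hc x = diagScale c x := rfl

theorem norm_diagScale_apply_le {c : Fin d → ℝ} {R : ℝ} (hc : ∀ i, |c i| ≤ R) (hR : 0 ≤ R)
    (x : Fin d → ℝ) : ‖diagScale c x‖ ≤ R * ‖x‖ := by
  refine (pi_norm_le_iff_of_nonneg (by positivity)).2 fun i => ?_
  rw [diagScale_apply, norm_mul]
  exact mul_le_mul (hc i) (norm_le_pi_norm x i) (norm_nonneg _) hR

theorem le_norm_diagScale_apply {c : Fin d → ℝ} (hc : ∀ i, 1 ≤ |c i|) (x : Fin d → ℝ) :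
    ‖x‖ ≤ ‖diagScale c x‖ := by
  refine (pi_norm_le_iff_of_nonneg (norm_nonneg _)).2 fun i => ?_
  refine le_trans ?_ (norm_le_pi_norm (diagScale c x) i)
  rw [diagScale_apply, norm_mul]
  exact le_mul_of_one_le_left (norm_nonneg _) (hc i)

theorem integral_comp_diagScale {c : Fin d → ℝ} (hc : ∀ i, 0 < c i) (g : (Fin d → ℝ) → ℝ) :
    ∫ w, g w = (∏ i, c i) * ∫ z, g (diagScale c z) := by
  have h0 : (Matrix.diagonal c).det = ∏ i, c i := Matrix.det_diagonal
  have hpos : 0 < ∏ i, c i := Finset.prod_pos fun i _ => hc i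
  have hemb : MeasurableEmbedding (diagScale c) :=
    (diagScaleEquiv c fun i => (hc i).ne').toHomeomorph.measurableEmbedding
  have hmap : Measure.map (diagScale c) volume = ENNReal.ofReal (∏ i, c i)⁻¹ • volume := by
    have h := Real.map_matrix_volume_pi_eq_smul_volume_pi (M := Matrix.diagonal c)
      (by rw [h0]; exact hpos.ne')
    rw [h0, abs_of_pos (by positivity)] at h
    rw [← h]
    congr 1
    ext x i
    simp [Matrix.toLin'_apply, Matrix.mulVec_diagonal]
  rw [← hemb.integral_map, hmap, integral_smul_measure, ENNReal.toReal_ofReal (by positivity),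
    smul_eq_mul, mul_inv_cancel_left₀ hpos.ne']

theorem seminorm_compCLMOfContinuousLinearEquiv_le (k l : ℕ) (θ : 𝓢(Fin d → ℝ, ℝ))
    (g : (Fin d → ℝ) ≃L[ℝ] (Fin d → ℝ)) {R : ℝ} (hR0 : 0 ≤ R) (hR : ∀ x, ‖g x‖ ≤ R * ‖x‖)
    (hg : ∀ x, ‖x‖ ≤ ‖g x‖) :
    SchwartzMap.seminorm ℝ k l (compCLMOfContinuousLinearEquiv ℝ g θ) ≤
      R ^ l * SchwartzMap.seminorm ℝ k l θ := by
  refine seminorm_le_bound ℝ k l _ (by positivity) fun x => ?_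
  have h1 : iteratedFDeriv ℝ l (compCLMOfContinuousLinearEquiv ℝ g θ) x =
      (iteratedFDeriv ℝ l θ (g x)).compContinuousLinearMap
        fun _ => (g : (Fin d → ℝ) →L[ℝ] (Fin d → ℝ)) :=
    (g : (Fin d → ℝ) →L[ℝ] (Fin d → ℝ)).iteratedFDeriv_comp_right (θ.smooth ⊤) x
      (mod_cast le_top)
  have h2 : ‖(g : (Fin d → ℝ) →L[ℝ] (Fin d → ℝ))‖ ≤ R :=
    ContinuousLinearMap.opNorm_le_bound _ hR0 hR
  rw [h1]
  calc _ ≤ ‖g x‖ ^ k * (‖iteratedFDeriv ℝ l θ (g x)‖ *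
        ∏ _i : Fin l, ‖(g : (Fin d → ℝ) →L[ℝ] (Fin d → ℝ))‖) := by
        gcongr
        · exact hg x
        · exact ContinuousMultilinearMap.norm_compContinuousLinearMap_le _ _
    _ ≤ ‖g x‖ ^ k * (‖iteratedFDeriv ℝ l θ (g x)‖ * R ^ l) := by
        simp only [Finset.prod_const, Finset.card_univ, Fintype.card_fin]
        gcongr
    _ = R ^ l * (‖g x‖ ^ k * ‖iteratedFDeriv ℝ l θ (g x)‖) := by ring
    _ ≤ _ := by gcongr; exact le_seminorm ℝ k l θ (g x)

theorem supSeminorm_compCLMOfContinuousLinearEquiv_le (k l : ℕ) (θ : 𝓢(Fin d → ℝ, ℝ))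
    (g : (Fin d → ℝ) ≃L[ℝ] (Fin d → ℝ)) {R : ℝ} (hR1 : 1 ≤ R) (hR : ∀ x, ‖g x‖ ≤ R * ‖x‖)
    (hg : ∀ x, ‖x‖ ≤ ‖g x‖) :
    supSeminorm k l (compCLMOfContinuousLinearEquiv ℝ g θ) ≤ R ^ l * supSeminorm k l θ := by
  refine Seminorm.finset_sup_apply_le (by positivity) fun ⟨k', l'⟩ hi => ?_
  refine (seminorm_compCLMOfContinuousLinearEquiv_le k' l' θ g (by positivity) hR hg).trans ?_
  gcongr
  · exact (Finset.mem_Iic.1 hi).2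
  · exact Seminorm.le_finset_sup_apply (p := schwartzSeminormFamily ℝ (Fin d → ℝ) ℝ) hi

theorem supSeminorm_comp_diagScaleEquiv_le (k l : ℕ) (θ : 𝓢(Fin d → ℝ, ℝ)) {c : Fin d → ℝ}
    (hc : ∀ i, c i ≠ 0) {R : ℝ} (hR1 : 1 ≤ R) (hR : ∀ i, |c i| ≤ R) (h1 : ∀ i, 1 ≤ |c i|) :
    supSeminorm k l (compCLMOfContinuousLinearEquiv ℝ (diagScaleEquiv c hc) θ) ≤
      R ^ l * supSeminorm k l θ :=
  supSeminorm_compCLMOfContinuousLinearEquiv_le k l θ _ hR1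
    (fun x => norm_diagScale_apply_le hR (zero_le_one.trans hR1) x)
    fun x => le_norm_diagScale_apply h1 x

/-- The reflected anisotropic dilation `y ↦ θ_j(-y)` as a Schwartz function. -/
def reflDil (a : Fin d → ℝ) (θ₀ θ : 𝓢(Fin d → ℝ, ℝ)) (j : ℕ) : 𝓢(Fin d → ℝ, ℝ) :=
  if j = 0 then
    compCLMOfContinuousLinearEquiv ℝ (diagScaleEquiv (fun _ => -1) fun _ => by simp) θ₀
  else (2 : ℝ) ^ ((j : ℝ) * ∑ i, a i) •
    compCLMOfContinuousLinearEquiv ℝ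
      (diagScaleEquiv (fun i => -(2 : ℝ) ^ ((j : ℝ) * a i)) fun _ => by
        simp only [ne_eq, neg_eq_zero]; positivity) θ

theorem reflDil_apply (a : Fin d → ℝ) (θ₀ θ : 𝓢(Fin d → ℝ, ℝ)) (j : ℕ) (y : Fin d → ℝ) :
    reflDil a θ₀ θ j y = anisoDil a θ₀ θ j (-y) := by
  by_cases hj : j = 0
  · simp only [reflDil, anisoDil, hj, if_true, compCLMOfContinuousLinearEquiv_apply,
      Function.comp_apply, diagScaleEquiv_apply]
    congr 1
    ext i
    simp
  · simp only [reflDil, anisoDil, hj, if_false, compCLMOfContinuousLinearEquiv_apply,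
      Function.comp_apply, diagScaleEquiv_apply, smul_apply, smul_eq_mul]
    congr 2
    ext i
    simp

theorem supSeminorm_reflDil_le {a : Fin d → ℝ} (ha : ∀ i, 1 ≤ a i) {K : ℕ} (hK : ∑ i, a i ≤ K)
    (θ₀ θ : 𝓢(Fin d → ℝ, ℝ)) (j k l : ℕ) :
    supSeminorm k l (reflDil a θ₀ θ j) ≤
      (2 ^ (K * (l + 1))) ^ j * (supSeminorm k l θ₀ + supSeminorm k l θ) := by
  by_cases hj : j = 0
  · subst hj
    simp only [reflDil, if_true, pow_zero, one_mul]
    refine (supSeminorm_comp_diagScaleEquiv_le k l θ₀ _ le_rfl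
      (fun _ => by simp) (fun _ => by simp)).trans ?_
    rw [one_pow, one_mul]
    exact le_add_of_nonneg_right (apply_nonneg _ _)
  have hja : ∀ i, 0 ≤ (j : ℝ) * a i := fun i =>
    mul_nonneg (Nat.cast_nonneg j) (zero_le_one.trans (ha i))
  have hpow : ∀ t : ℝ, t ≤ K → (2 : ℝ) ^ ((j : ℝ) * t) ≤ 2 ^ (K * j) := fun t ht => by
    rw [← Real.rpow_natCast]
    refine Real.rpow_le_rpow_of_exponent_le one_le_two ?_
    push_cast
    rw [mul_comm (K : ℝ)]
    gcongr
  have hai : ∀ i, a i ≤ K := fun i => (Finset.single_le_sum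
    (fun i _ => zero_le_one.trans (ha i)) (Finset.mem_univ i)).trans hK
  simp only [reflDil, hj, if_false]
  rw [map_smul_eq_mul, Real.norm_of_nonneg (by positivity)]
  have habs : ∀ i, |-(2 : ℝ) ^ ((j : ℝ) * a i)| = 2 ^ ((j : ℝ) * a i) := fun i => by
    rw [abs_neg, abs_of_nonneg (by positivity)]
  have h := supSeminorm_comp_diagScaleEquiv_le k l θ (c := fun i => -(2 : ℝ) ^ ((j : ℝ) * a i))
    (fun _ => by simp only [ne_eq, neg_eq_zero]; positivity) (R := 2 ^ (K * j))
    (one_le_pow₀ one_le_two) (fun i => by rw [habs]; exact hpow _ (hai i))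
    (fun i => by rw [habs]; exact Real.one_le_rpow one_le_two (hja i))
  calc _ ≤ 2 ^ (K * j) * ((2 ^ (K * j)) ^ l * supSeminorm k l θ) :=
        mul_le_mul (hpow _ hK) h (apply_nonneg _ _) (by positivity)
    _ = (2 ^ (K * (l + 1))) ^ j * supSeminorm k l θ := by ring
    _ ≤ _ := by
        gcongr
        exact le_add_of_nonneg_left (apply_nonneg _ _)

end Dilation

section Correlation

variable {d : ℕ}

theorem supSeminorm_mono {E F : Type u} [NormedAddCommGroup E] [NormedSpace ℝ E]
    [NormedAddCommGroup F] [NormedSpace ℝ F] {k l k' l' : ℕ} (hk : k ≤ k') (hl : l ≤ l')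
    (η : 𝓢(E, F)) : supSeminorm k l η ≤ supSeminorm k' l' η :=
  Finset.sup_mono (f := schwartzSeminormFamily ℝ E F)
    (Finset.Iic_subset_Iic.2 (Prod.mk_le_mk.2 ⟨hk, hl⟩)) η

/-- The correlation `x ↦ ∫ θ_j(z - x) η(z) dz`, i.e. the convolution of `η` with the reflection of
`θ_j`. -/
def dilCorrelation (a : Fin d → ℝ) (θ₀ θ : 𝓢(Fin d → ℝ, ℝ)) (j : ℕ) (η : 𝓢(Fin d → ℝ, ℝ))
    (x : Fin d → ℝ) : ℝ :=
  ∫ z, anisoDil a θ₀ θ j (z - x) * η z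

theorem dilCorrelation_eq (a : Fin d → ℝ) (θ₀ θ : 𝓢(Fin d → ℝ, ℝ)) (j : ℕ) (η : 𝓢(Fin d → ℝ, ℝ))
    (x : Fin d → ℝ) :
    dilCorrelation a θ₀ θ j η x = ∫ w, (if j = 0 then θ₀ else θ) w *
      η (x + diagScale (fun i => ((2 : ℝ) ^ ((j : ℝ) * a i))⁻¹) w) := by
  have h : dilCorrelation a θ₀ θ j η x = ∫ z, anisoDil a θ₀ θ j z * η (x + z) := by
    rw [dilCorrelation, ← integral_add_left_eq_self _ x]
    simp
  rw [h]
  by_cases hj : j = 0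
  · subst hj
    simp only [anisoDil, if_true]
    congr with w
    congr 3
    ext i
    simp
  · simp only [anisoDil, hj, if_false]
    rw [integral_comp_diagScale (c := fun i => (2 : ℝ) ^ ((j : ℝ) * a i)) (fun i => by positivity)
        fun w => θ w * η (x + diagScale (fun i => ((2 : ℝ) ^ ((j : ℝ) * a i))⁻¹) w),
      ← Real.rpow_sum_of_pos two_pos, ← Finset.mul_sum, ← integral_const_mul]
    congr with z
    have h1 : diagScale (fun i => ((2 : ℝ) ^ ((j : ℝ) * a i))⁻¹)
        (diagScale (fun i => (2 : ℝ) ^ ((j : ℝ) * a i)) z) = z := by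
      ext i
      simp only [diagScale_apply]
      exact inv_mul_cancel_left₀ (by positivity) _
    rw [h1, mul_assoc]
    rfl

theorem continuous_dilCorrelation (a : Fin d → ℝ) (θ₀ θ : 𝓢(Fin d → ℝ, ℝ)) (j : ℕ)
    (η : 𝓢(Fin d → ℝ, ℝ)) : Continuous (dilCorrelation a θ₀ θ j η) := by
  rw [funext (dilCorrelation_eq a θ₀ θ j η)]
  refine continuous_of_dominated (fun x => (integrable_mul_comp_add _ η _ x).1)
    (bound := fun w => ‖(if j = 0 then θ₀ else θ) w‖ * SchwartzMap.seminorm ℝ 0 0 η)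
    (fun x => Eventually.of_forall fun w => ?_) ((integrable _).norm.mul_const _)
    (Eventually.of_forall fun w => by fun_prop)
  rw [norm_mul]
  gcongr
  exact norm_le_seminorm ℝ η _

theorem dilCorrelation_add (a : Fin d → ℝ) (θ₀ θ : 𝓢(Fin d → ℝ, ℝ)) (j : ℕ)
    (η ζ : 𝓢(Fin d → ℝ, ℝ)) (x : Fin d → ℝ) :
    dilCorrelation a θ₀ θ j (η + ζ) x =
      dilCorrelation a θ₀ θ j η x + dilCorrelation a θ₀ θ j ζ x := by
  simp only [dilCorrelation_eq, add_apply, mul_add]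
  exact integral_add (integrable_mul_comp_add _ η _ x) (integrable_mul_comp_add _ ζ _ x)

theorem dilCorrelation_smul (a : Fin d → ℝ) (θ₀ θ : 𝓢(Fin d → ℝ, ℝ)) (j : ℕ) (c : ℝ)
    (η : 𝓢(Fin d → ℝ, ℝ)) (x : Fin d → ℝ) :
    dilCorrelation a θ₀ θ j (c • η) x = c * dilCorrelation a θ₀ θ j η x := by
  simp only [dilCorrelation, smul_apply, smul_eq_mul, ← integral_const_mul]
  congr with z
  ring

theorem exists_one_add_pow_mul_dilCorrelation_le {a : Fin d → ℝ} (ha : ∀ i, 1 ≤ a i)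
    (θ₀ θ : 𝓢(Fin d → ℝ, ℝ)) (hθ : VanishingMoments θ) (N M : ℕ) :
    ∃ C : ℝ, 0 ≤ C ∧ ∀ (j : ℕ) (η : 𝓢(Fin d → ℝ, ℝ)) (x : Fin d → ℝ),
      (1 + ‖x‖) ^ N * |dilCorrelation a θ₀ θ j η x| ≤
        ((1 / 2) ^ j) ^ (M + 1) * C * supSeminorm N (M + 1) η := by
  set I₀ := ∫ w, (1 + ‖w‖) ^ N * |θ₀ w| with hI₀
  set I := ∫ w, (1 + ‖w‖) ^ (M + 1 + N) * |θ w| with hI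
  have h0 : 0 ≤ I₀ := integral_nonneg fun w => by positivity
  have h1 : 0 ≤ I := integral_nonneg fun w => by positivity
  refine ⟨(I₀ + I) * 2 ^ N, by positivity, fun j η x => ?_⟩
  rw [dilCorrelation_eq]
  have hs : 0 ≤ supSeminorm N (M + 1) η := apply_nonneg _ _
  by_cases hj : j = 0
  · subst hj
    have hid : ∀ w, diagScale (fun i => ((2 : ℝ) ^ (((0 : ℕ) : ℝ) * a i))⁻¹) w = w := fun w => by
      ext i; simp
    simp only [hid, if_true, pow_zero, one_pow, one_mul]
    refine (one_add_pow_mul_integral_le N θ₀ η x).trans ?_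
    rw [← hI₀, mul_assoc]
    gcongr
    · linarith
    · exact supSeminorm_mono le_rfl (Nat.zero_le _) η
  · simp only [hj, if_false]
    refine (one_add_pow_mul_integral_comp_le N M θ hθ η _ (r := (1 / 2) ^ j) (by positivity)
      (pow_le_one₀ (by norm_num) (by norm_num))
      (norm_diagScale_apply_le (fun i => ?_) (by positivity)) x).trans ?_
    · rw [abs_of_nonneg (by positivity), one_div, inv_pow]
      gcongr
      rw [← Real.rpow_natCast]
      exact Real.rpow_le_rpow_of_exponent_le one_le_two
        (le_mul_of_one_le_right (Nat.cast_nonneg j) (ha i))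
    · rw [← hI]
      have : ((1 / 2 : ℝ) ^ j) ^ (M + 1) * I * (2 ^ N * supSeminorm N (M + 1) η) =
          ((1 / 2) ^ j) ^ (M + 1) * (I * 2 ^ N) * supSeminorm N (M + 1) η := by ring
      rw [this]
      gcongr
      linarith

theorem one_add_pow_mul_abs_le_of_decay {h : (Fin d → ℝ) → ℝ} {k : ℕ} {B : ℝ}
    (hB : ∀ x, (1 + ‖x‖) ^ (k + (d + 1)) * |h x| ≤ B) (x : Fin d → ℝ) :
    (1 + ‖x‖) ^ k * |h x| ≤ B * (1 + ‖x‖) ^ (-((d + 1 : ℕ) : ℝ)) := by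
  have hp : 0 < 1 + ‖x‖ := by positivity
  rw [Real.rpow_neg hp.le, Real.rpow_natCast, ← div_eq_mul_inv, le_div_iff₀ (by positivity)]
  refine le_trans (le_of_eq ?_) (hB x)
  ring

theorem integrable_one_add_norm_rpow :
    Integrable fun x : Fin d → ℝ => (1 + ‖x‖) ^ (-((d + 1 : ℕ) : ℝ)) :=
  integrable_one_add_norm (by simp)

theorem integrable_one_add_pow_mul_of_decay {h : (Fin d → ℝ) → ℝ} (hc : Continuous h) {k : ℕ}
    {B : ℝ} (hB : ∀ x, (1 + ‖x‖) ^ (k + (d + 1)) * |h x| ≤ B) :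
    Integrable fun x => (1 + ‖x‖) ^ k * h x := by
  have hm : Continuous fun x => (1 + ‖x‖) ^ k * h x := by fun_prop
  refine (integrable_one_add_norm_rpow.const_mul B).mono' hm.aestronglyMeasurable
    (Eventually.of_forall fun x => ?_)
  rw [norm_mul, Real.norm_of_nonneg (by positivity), Real.norm_eq_abs]
  exact one_add_pow_mul_abs_le_of_decay hB x

theorem setIntegral_one_add_pow_mul_le_of_decay {h : (Fin d → ℝ) → ℝ} {k : ℕ} {B : ℝ}
    (hB : ∀ x, (1 + ‖x‖) ^ (k + (d + 1)) * |h x| ≤ B) (s : Set (Fin d → ℝ)) :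
    ∫ x in s, (1 + ‖x‖) ^ k * |h x| ≤
      B * ∫ x : Fin d → ℝ, (1 + ‖x‖) ^ (-((d + 1 : ℕ) : ℝ)) := by
  have hint := integrable_one_add_norm_rpow (d := d).const_mul B
  have hB0 : 0 ≤ B := le_trans (by positivity) (hB 0)
  rw [← integral_const_mul]
  calc _ ≤ ∫ x in s, B * (1 + ‖x‖) ^ (-((d + 1 : ℕ) : ℝ)) :=
        integral_mono_of_nonneg (Eventually.of_forall fun x => by positivity) hint.restrict
          (Eventually.of_forall fun x => one_add_pow_mul_abs_le_of_decay hB x)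
    _ ≤ _ := setIntegral_le_integral hint (Eventually.of_forall fun x => by positivity)

theorem integrable_one_add_pow_mul_dilCorrelation {a : Fin d → ℝ} (ha : ∀ i, 1 ≤ a i)
    (θ₀ θ : 𝓢(Fin d → ℝ, ℝ)) (hθ : VanishingMoments θ) (s : Set (Fin d → ℝ)) (j : ℕ)
    (η : 𝓢(Fin d → ℝ, ℝ)) (k : ℕ) :
    Integrable (fun x => (1 + ‖x‖) ^ k * dilCorrelation a θ₀ θ j η x) (volume.restrict s) := by
  obtain ⟨C, -, hC⟩ := exists_one_add_pow_mul_dilCorrelation_le ha θ₀ θ hθ (k + (d + 1)) 0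
  exact (integrable_one_add_pow_mul_of_decay (continuous_dilCorrelation a θ₀ θ j η)
    (hC j η)).restrict

end Correlation

section Extension

variable {d : ℕ} {a : Fin d → ℝ} (ha : ∀ i, 1 ≤ a i) (φ₀ φ ψ₀ ψ : 𝓢(Fin d → ℝ, ℝ))
  (hψ : VanishingMoments ψ) (s : Set (Fin d → ℝ))

/-- The map `η ↦ φ̌_j * (1_s · (ψ̌_j * η))` on Schwartz space, where `φ̌_j`, `ψ̌_j` are the
reflections of the anisotropic dilations `φ_j`, `ψ_j`. -/
def truncatedCorrelation (j : ℕ) : 𝓢(Fin d → ℝ, ℝ) →ₗ[ℝ] 𝓢(Fin d → ℝ, ℝ) where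
  toFun η := smoothingIntegral (integrable_one_add_pow_mul_dilCorrelation ha ψ₀ ψ hψ s j η)
    (reflDil a φ₀ φ j)
  map_add' η ζ := by
    ext y
    simp only [smoothingIntegral_apply, add_apply, dilCorrelation_add, add_smul]
    exact integral_add
      (integrable_smul_comp_sub (by
        simpa using integrable_one_add_pow_mul_dilCorrelation ha ψ₀ ψ hψ s j η 0) _ y)
      (integrable_smul_comp_sub (by
        simpa using integrable_one_add_pow_mul_dilCorrelation ha ψ₀ ψ hψ s j ζ 0) _ y)
  map_smul' c η := by
    ext y
    simp only [smoothingIntegral_apply, smul_apply, dilCorrelation_smul, RingHom.id_apply,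
      smul_eq_mul, mul_assoc, integral_const_mul]

theorem truncatedCorrelation_apply (j : ℕ) (η : 𝓢(Fin d → ℝ, ℝ)) (y : Fin d → ℝ) :
    truncatedCorrelation ha φ₀ φ ψ₀ ψ hψ s j η y =
      ∫ x in s, dilCorrelation a ψ₀ ψ j η x * anisoDil a φ₀ φ j (x - y) := by
  simp [truncatedCorrelation, reflDil_apply]

theorem map_truncatedCorrelation (j : ℕ) (η : 𝓢(Fin d → ℝ, ℝ)) (f : 𝓢(Fin d → ℝ, ℝ) →L[ℝ] ℝ) :
    f (truncatedCorrelation ha φ₀ φ ψ₀ ψ hψ s j η) =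
      ∫ x in s, dilCorrelation a ψ₀ ψ j η x * f ((reflDil a φ₀ φ j).compSubConstCLM ℝ x) :=
  map_smoothingIntegral (integrable_one_add_pow_mul_dilCorrelation ha ψ₀ ψ hψ s j η) _ f

theorem exists_clm_hasSum_truncatedCorrelation :
    ∃ T : 𝓢(Fin d → ℝ, ℝ) →L[ℝ] 𝓢(Fin d → ℝ, ℝ), ∀ η,
      HasSum (fun j => truncatedCorrelation ha φ₀ φ ψ₀ ψ hψ s j η) (T η) := by
  refine exists_clm_hasSum fun k l => ?_
  obtain ⟨K, hK⟩ := exists_nat_ge (∑ i, a i)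
  set M := K * (l + 1)
  obtain ⟨C, hC0, hC⟩ := exists_one_add_pow_mul_dilCorrelation_le ha ψ₀ ψ hψ (k + (d + 1)) M
  set J := ∫ x : Fin d → ℝ, (1 + ‖x‖) ^ (-((d + 1 : ℕ) : ℝ))
  have hJ : 0 ≤ J := integral_nonneg fun x => by positivity
  set D := supSeminorm k l φ₀ + supSeminorm k l φ
  have hD : 0 ≤ D := add_nonneg (apply_nonneg _ _) (apply_nonneg _ _)
  refine ⟨Finset.Iic (k + (d + 1), M + 1), C * J * (2 ^ k * D), by positivity, fun j η => ?_⟩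
  have hS : 0 ≤ supSeminorm (k + (d + 1)) (M + 1) η := apply_nonneg _ _
  calc SchwartzMap.seminorm ℝ k l (truncatedCorrelation ha φ₀ φ ψ₀ ψ hψ s j η)
      ≤ (∫ x in s, (1 + ‖x‖) ^ k * |dilCorrelation a ψ₀ ψ j η x|) *
          (2 ^ k * supSeminorm k l (reflDil a φ₀ φ j)) :=
        seminorm_smoothingIntegral_le
          (integrable_one_add_pow_mul_dilCorrelation ha ψ₀ ψ hψ s j η) k l _
    _ ≤ (((1 / 2) ^ j) ^ (M + 1) * C * supSeminorm (k + (d + 1)) (M + 1) η * J) *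
          (2 ^ k * ((2 ^ M) ^ j * D)) := by
        gcongr
        · exact setIntegral_one_add_pow_mul_le_of_decay (hC j η) s
        · exact supSeminorm_reflDil_le ha hK φ₀ φ j k l
    _ = ((1 / 2) ^ j) ^ M * (2 ^ M) ^ j * (C * J * (2 ^ k * D) * (1 / 2) ^ j *
          supSeminorm (k + (d + 1)) (M + 1) η) := by ring
    _ = C * J * (2 ^ k * D) * (1 / 2) ^ j * supSeminorm (k + (d + 1)) (M + 1) η := by
        rw [← pow_mul, ← pow_mul, mul_comm M j, ← mul_pow]
        norm_num
    _ = _ := rfl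

end Extension

theorem anisoDil_eq_zero_of_nonneg {d : ℕ} {a : Fin d → ℝ} {θ₀ θ : (Fin d → ℝ) → ℝ} {i : Fin d}
    (h₀ : tsupport θ₀ ⊆ {x | x i < 0}) (h : tsupport θ ⊆ {x | x i < 0}) {j : ℕ} {x : Fin d → ℝ}
    (hx : 0 ≤ x i) : anisoDil a θ₀ θ j x = 0 := by
  have key : ∀ {g : (Fin d → ℝ) → ℝ} {y : Fin d → ℝ}, tsupport g ⊆ {x | x i < 0} → 0 ≤ y i →
      g y = 0 := fun hg hy => image_eq_zero_of_notMem_tsupport fun hmem => (hg hmem).not_ge hy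
  unfold anisoDil
  split_ifs with hj
  · exact key h₀ hx
  · rw [key h (mul_nonneg (by positivity) hx), mul_zero]

end SchwartzMap

/-- With `φ₀, φ, ψ₀, ψ ∈ 𝓢(ℝⁿ)` supported in `{xₙ < 0}` and `φ, ψ` having
vanishing moments of all orders, the series `Tη = Σ_j φ̌_j * (1_{ℝⁿ₊}·(ψ̌_j * η))` converges
in `𝓢(ℝⁿ)` and defines a continuous linear map `T : 𝓢(ℝⁿ) → 𝓢(ℝⁿ)`; each `Tη` is supported in
`{xₙ ≥ 0}`; the extension operator satisfies `⟨E_u(f), η⟩ = ⟨f, Tη⟩`; hence `E_u` is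
weak*-continuous and `E_u(f) = E_u(g)` whenever `f, g` agree on Schwartz functions supported
in `{xₙ ≥ 0}`. -/
theorem universal_extension_adjoint (n : ℕ) (a : Fin (n+1) → ℝ)
    (ha : ∀ i, 1 ≤ a i)
    (φ₀ φ ψ₀ ψ : SchwartzMap (Fin (n+1) → ℝ) ℝ)
    (hφ₀s : tsupport ⇑φ₀ ⊆ {x : Fin (n+1) → ℝ | x (Fin.last n) < 0})
    (hφs : tsupport ⇑φ ⊆ {x : Fin (n+1) → ℝ | x (Fin.last n) < 0})
    (hψ₀s : tsupport ⇑ψ₀ ⊆ {x : Fin (n+1) → ℝ | x (Fin.last n) < 0})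
    (hψs : tsupport ⇑ψ ⊆ {x : Fin (n+1) → ℝ | x (Fin.last n) < 0})
    (hφm : VanishingMoments ⇑φ) (hψm : VanishingMoments ⇑ψ) :
    ∃ T : SchwartzMap (Fin (n+1) → ℝ) ℝ →L[ℝ] SchwartzMap (Fin (n+1) → ℝ) ℝ,
      -- the series `Σ_j φ̌_j * (1_{ℝⁿ₊}·(ψ̌_j * η))` converges to `Tη` in `𝓢(ℝⁿ)`
      (∀ (η : SchwartzMap (Fin (n+1) → ℝ) ℝ)
         (uu : ℕ → SchwartzMap (Fin (n+1) → ℝ) ℝ),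
        (∀ (j : ℕ) (y : Fin (n+1) → ℝ),
          uu j y = ∫ x in {x : Fin (n+1) → ℝ | 0 < x (Fin.last n)},
            (∫ z : Fin (n+1) → ℝ, anisoDil a ⇑ψ₀ ⇑ψ j (z - x) * η z)
              * anisoDil a ⇑φ₀ ⇑φ j (x - y)) →
        Tendsto (fun N => ∑ j ∈ Finset.range N, uu j) atTop (nhds (T η))) ∧
      -- every `Tη` is supported in the closed half-space `{xₙ ≥ 0}`
      (∀ η : SchwartzMap (Fin (n+1) → ℝ) ℝ,
        tsupport ⇑(T η) ⊆ {y : Fin (n+1) → ℝ | 0 ≤ y (Fin.last n)}) ∧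
      -- `⟨E_u(f), η⟩ = ⟨f, Tη⟩`, where `⟨E_u(f), η⟩ = Σ_j ⟨e₊(φ_j*f), ψ̌_j*η⟩`
      (∀ (f : SchwartzMap (Fin (n+1) → ℝ) ℝ →L[ℝ] ℝ)
         (tr : ℕ → (Fin (n+1) → ℝ) → SchwartzMap (Fin (n+1) → ℝ) ℝ),
        (∀ (j : ℕ) (x y : Fin (n+1) → ℝ), tr j x y = anisoDil a ⇑φ₀ ⇑φ j (x - y)) →
        ∀ η : SchwartzMap (Fin (n+1) → ℝ) ℝ,
          (∑' j : ℕ, ∫ x in {x : Fin (n+1) → ℝ | 0 < x (Fin.last n)},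
            f (tr j x) * (∫ z : Fin (n+1) → ℝ, anisoDil a ⇑ψ₀ ⇑ψ j (z - x) * η z))
            = f (T η)) ∧
      -- weak*-continuity of `E_u : f ↦ f ∘ T`
      (∀ η : SchwartzMap (Fin (n+1) → ℝ) ℝ,
        Continuous fun f : WeakDual ℝ (SchwartzMap (Fin (n+1) → ℝ) ℝ) => f (T η)) ∧
      -- `E_u(f) = E_u(g)` when `f, g` agree on Schwartz functions supported in `{xₙ ≥ 0}`
      (∀ f g : SchwartzMap (Fin (n+1) → ℝ) ℝ →L[ℝ] ℝ,
        (∀ θ : SchwartzMap (Fin (n+1) → ℝ) ℝ,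
          tsupport ⇑θ ⊆ {x : Fin (n+1) → ℝ | 0 ≤ x (Fin.last n)} → f θ = g θ) →
        ∀ η : SchwartzMap (Fin (n+1) → ℝ) ℝ, f (T η) = g (T η)) := by
  obtain ⟨T, hT⟩ := SchwartzMap.exists_clm_hasSum_truncatedCorrelation ha φ₀ φ ψ₀ ψ hψm
    {x : Fin (n+1) → ℝ | 0 < x (Fin.last n)}
  set A := SchwartzMap.truncatedCorrelation ha φ₀ φ ψ₀ ψ hψm
    {x : Fin (n+1) → ℝ | 0 < x (Fin.last n)} with hA
  have hsupp : ∀ η : SchwartzMap (Fin (n+1) → ℝ) ℝ,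
      tsupport ⇑(T η) ⊆ {y : Fin (n+1) → ℝ | 0 ≤ y (Fin.last n)} := by
    intro η
    refine closure_minimal (fun y hy => ?_)
      (isClosed_le continuous_const (continuous_apply (Fin.last n)))
    by_contra hneg
    refine hy ?_
    have hy0 : ∀ j, A j η y = 0 := fun j => by
      rw [hA, SchwartzMap.truncatedCorrelation_apply]
      refine setIntegral_eq_zero_of_forall_eq_zero fun x hx => ?_
      rw [SchwartzMap.anisoDil_eq_zero_of_nonneg hφ₀s hφs, mul_zero]
      simp only [Set.mem_ofPred_eq, not_le, Pi.sub_apply] at hx hneg ⊢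
      linarith
    have hlim : HasSum (fun j => A j η y) (T η y) :=
      (hT η).mapL (BoundedContinuousFunction.evalCLM ℝ y ∘L
        SchwartzMap.toBoundedContinuousFunctionCLM ℝ (Fin (n+1) → ℝ) ℝ)
    simp only [hy0] at hlim
    exact hlim.unique hasSum_zero
  refine ⟨T, fun η uu huu => ?_, hsupp, fun f tr htr η => ?_,
    fun η => WeakDual.eval_continuous (T η), fun f g hfg η => hfg (T η) (hsupp η)⟩
  · have huA : uu = fun j => A j η := by
      funext j
      ext y
      rw [huu, hA, SchwartzMap.truncatedCorrelation_apply]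
      rfl
    rw [huA]
    exact (hT η).tendsto_sum_nat
  · have htr' : ∀ j x, tr j x = (SchwartzMap.reflDil a φ₀ φ j).compSubConstCLM ℝ x := by
      intro j x
      ext y
      simp [htr, SchwartzMap.reflDil_apply]
    rw [← ((hT η).mapL f).tsum_eq]
    refine tsum_congr fun j => ?_
    rw [hA, SchwartzMap.map_truncatedCorrelation]
    refine integral_congr_ae (Eventually.of_forall fun x => ?_)
    simp only [htr', SchwartzMap.dilCorrelation]
    rw [mul_comm]

end
end

section
/- Let a = (a₁,…,aₙ) ∈ [1,∞)ⁿ and let φ₀, φ, ψ₀, ψ ∈ 𝓢(ℝⁿ) be supported in {x ∈ ℝⁿ : xₙ < 0}, with φ and ψ having vanishing moments of all orders, and assume the Calderón reproducing formula u = Σ_{j=0}^∞ ψ_j * (φ_j * u) holds in the weak* topology of 𝓢'(ℝⁿ) for every u ∈ 𝓢'(ℝⁿ). Then the operator E_u(f) = Σ_{j=0}^∞ ψ_j * e₊(φ_j * f) is a left-invertible extension from the half-space: for every f ∈ 𝓢'(ℝⁿ) and every smooth compactly supported test function χ with supp χ ⊆ ℝⁿ₊ = {x : xₙ > 0}, one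 has ⟨E_u(f), χ⟩ = ⟨f, χ⟩. -/
open MeasureTheory Filter Topology

noncomputable section

section SchwartzIntegral

open SchwartzMap
open scoped SchwartzMap BoundedContinuousFunction ContDiff

variable {E F : Type*} [NormedAddCommGroup E] [NormedSpace ℝ E]
  [NormedAddCommGroup F] [NormedSpace ℝ F]

/-- A linear functional dominated by the norm of `J v` factors continuously through `J`. -/
theorem exists_clm_comp_eq_of_le_norm {V B : Type*} [AddCommGroup V] [Module ℝ V]
    [NormedAddCommGroup B] [NormedSpace ℝ B] (J : V →ₗ[ℝ] B) (f : V →ₗ[ℝ] ℝ) (C : ℝ)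
    (h : ∀ v, ‖f v‖ ≤ C * ‖J v‖) : ∃ g : B →L[ℝ] ℝ, ∀ v, g (J v) = f v := by
  have hker : LinearMap.ker J ≤ LinearMap.ker f := by
    intro v hv
    have hfv := h v
    rw [LinearMap.mem_ker.1 hv, norm_zero, mul_zero] at hfv
    exact LinearMap.mem_ker.2 (norm_le_zero_iff.1 hfv)
  let f₀ : LinearMap.range J →ₗ[ℝ] ℝ :=
    ((LinearMap.ker J).liftQ f hker).comp J.quotKerEquivRange.symm.toLinearMap
  have hf₀ (v : V) : f₀ ⟨J v, LinearMap.mem_range_self J v⟩ = f v := by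
    have hv : (⟨J v, LinearMap.mem_range_self J v⟩ : LinearMap.range J)
        = J.quotKerEquivRange (Submodule.Quotient.mk v) := rfl
    simp [f₀, hv]
  obtain ⟨g, hg, -⟩ := exists_extension_norm_eq (𝕜 := ℝ) (LinearMap.range J)
    (f₀.mkContinuous C (by rintro ⟨_, v, rfl⟩; rw [hf₀]; exact h v))
  exact ⟨g, fun v ↦ by simpa [hf₀] using hg ⟨J v, LinearMap.mem_range_self J v⟩⟩

/-- A linear functional dominated by finitely many vector-valued maps `J i` commutes with an integral
as soon as every `J i` does. -/
theorem apply_eq_integral_of_norm_le {V X ι : Type*} [AddCommGroup V] [Module ℝ V] [Fintype ι]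
    {B : ι → Type*} [∀ i, NormedAddCommGroup (B i)] [∀ i, NormedSpace ℝ (B i)]
    [∀ i, CompleteSpace (B i)] [MeasurableSpace X] {μ : Measure X}
    (J : ∀ i, V →ₗ[ℝ] B i) (f : V →ₗ[ℝ] ℝ) (C : ℝ) (h : ∀ v, ‖f v‖ ≤ C * ‖fun i ↦ J i v‖)
    (T : X → V) (c : V) (hint : ∀ i, Integrable (fun x ↦ J i (T x)) μ)
    (hc : ∀ i, J i c = ∫ x, J i (T x) ∂μ) : f c = ∫ x, f (T x) ∂μ := by
  obtain ⟨g, hg⟩ := exists_clm_comp_eq_of_le_norm (LinearMap.pi J) f C h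
  have hJint : Integrable (fun x ↦ LinearMap.pi J (T x)) μ := Integrable.of_eval hint
  have hJ : LinearMap.pi J c = ∫ x, LinearMap.pi J (T x) ∂μ := by
    funext i
    exact (hc i).trans (eval_integral (f := fun x ↦ LinearMap.pi J (T x)) hint i).symm
  rw [← hg c, hJ, ← g.integral_comp_comm hJint]
  exact integral_congr_ae (.of_forall fun x ↦ hg (T x))

/-- Bounded continuous functions with values in the continuous `l`-linear maps. -/
def BoundedMultilinearField (E F : Type*) [NormedAddCommGroup E] [NormedSpace ℝ E]
    [NormedAddCommGroup F] [NormedSpace ℝ F] (l : ℕ) : Type _ :=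
  E →ᵇ (E [×l]→L[ℝ] F)

namespace BoundedMultilinearField

instance (l : ℕ) : NormedAddCommGroup (BoundedMultilinearField E F l) :=
  inferInstanceAs (NormedAddCommGroup (E →ᵇ (E [×l]→L[ℝ] F)))

instance (l : ℕ) : NormedSpace ℝ (BoundedMultilinearField E F l) :=
  inferInstanceAs (NormedSpace ℝ (E →ᵇ (E [×l]→L[ℝ] F)))

instance [CompleteSpace F] (l : ℕ) : CompleteSpace (BoundedMultilinearField E F l) :=
  inferInstanceAs (CompleteSpace (E →ᵇ (E [×l]→L[ℝ] F)))

/-- Evaluation at a point. -/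
def evalCLM (l : ℕ) (y : E) : BoundedMultilinearField E F l →L[ℝ] (E [×l]→L[ℝ] F) :=
  BoundedContinuousFunction.evalCLM (α := E) (β := E [×l]→L[ℝ] F) ℝ y

theorem ext_evalCLM {l : ℕ} {u v : BoundedMultilinearField E F l}
    (h : ∀ y, evalCLM l y u = evalCLM l y v) : u = v :=
  BoundedContinuousFunction.ext h

theorem norm_evalCLM_apply_le {l : ℕ} (y : E) (u : BoundedMultilinearField E F l) :
    ‖evalCLM l y u‖ ≤ ‖u‖ :=
  BoundedContinuousFunction.norm_coe_le_norm (α := E) (β := E [×l]→L[ℝ] F) u y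

end BoundedMultilinearField

open BoundedMultilinearField

/-- The weighted derivative `y ↦ ‖y‖ ^ k • D^l η y` as a bounded continuous function. -/
def SchwartzMap.weightedDeriv (k l : ℕ) (η : 𝓢(E, F)) : BoundedMultilinearField E F l :=
  BoundedContinuousFunction.ofNormedAddCommGroup
    (fun y ↦ ‖y‖ ^ k • iteratedFDeriv ℝ l η y)
    ((continuous_norm.pow k).smul
      ((η.smooth ⊤).continuous_iteratedFDeriv (mod_cast le_top)))
    (SchwartzMap.seminorm ℝ k l η)
    (fun y ↦ by simpa [norm_smul] using le_seminorm ℝ k l η y)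

@[simp]
theorem SchwartzMap.evalCLM_weightedDeriv (k l : ℕ) (η : 𝓢(E, F)) (y : E) :
    BoundedMultilinearField.evalCLM l y (weightedDeriv k l η)
      = ‖y‖ ^ k • iteratedFDeriv ℝ l η y := rfl

theorem SchwartzMap.norm_weightedDeriv (k l : ℕ) (η : 𝓢(E, F)) :
    ‖weightedDeriv k l η‖ = SchwartzMap.seminorm ℝ k l η := by
  apply le_antisymm
  · exact BoundedContinuousFunction.norm_ofNormedAddCommGroup_le _ (apply_nonneg _ _) _
  · refine seminorm_le_bound ℝ k l η (norm_nonneg (weightedDeriv k l η)) fun y ↦ ?_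
    simpa [norm_smul] using norm_evalCLM_apply_le y (weightedDeriv k l η)

/-- `SchwartzMap.weightedDeriv` as a continuous linear map. -/
def SchwartzMap.weightedDerivCLM_s7 (k l : ℕ) : 𝓢(E, F) →L[ℝ] BoundedMultilinearField E F l :=
  mkCLMtoNormedSpace (weightedDeriv k l)
    (fun f g ↦ ext_evalCLM fun y ↦ by
      simp [FunLike.coe_add, iteratedFDeriv_add_apply ((f.smooth l).contDiffAt)
        ((g.smooth l).contDiffAt)])
    (fun a f ↦ ext_evalCLM fun y ↦ by
      simp [FunLike.coe_smul, iteratedFDeriv_const_smul_apply ((f.smooth l).contDiffAt),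
        smul_comm a])
    ⟨{(k, l)}, 1, zero_le_one, fun f ↦ by simp [norm_weightedDeriv, schwartzSeminormFamily]⟩

@[simp]
theorem SchwartzMap.weightedDerivCLM_apply_s7 (k l : ℕ) (η : 𝓢(E, F)) :
    weightedDerivCLM_s7 k l η = weightedDeriv k l η := rfl

section Family

variable {X : Type*} [TopologicalSpace X] {T : X → 𝓢(E, F)}

theorem SchwartzMap.continuous_iteratedFDeriv_family (hT : Continuous T) (l : ℕ) (y : E) :
    Continuous fun x ↦ iteratedFDeriv ℝ l (T x) y := by
  have h := (BoundedMultilinearField.evalCLM l y).continuous.comp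
    ((weightedDerivCLM_s7 0 l).continuous.comp hT)
  refine h.congr fun x ↦ ?_
  simp

variable [SecondCountableTopology X] [MeasurableSpace X] [BorelSpace X] {μ : Measure X}

theorem SchwartzMap.integrable_iteratedFDeriv_family (hT : Continuous T)
    (hint : ∀ k l, Integrable (fun x ↦ SchwartzMap.seminorm ℝ k l (T x)) μ) (l : ℕ) (y : E) :
    Integrable (fun x ↦ iteratedFDeriv ℝ l (T x) y) μ :=
  (hint 0 l).mono' (continuous_iteratedFDeriv_family hT l y).aestronglyMeasurable
    (.of_forall fun x ↦ norm_iteratedFDeriv_le_seminorm ℝ (T x) l y)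

theorem SchwartzMap.integrable_weightedDeriv_family (hT : Continuous T)
    (hint : ∀ k l, Integrable (fun x ↦ SchwartzMap.seminorm ℝ k l (T x)) μ) (k l : ℕ) :
    Integrable (fun x ↦ weightedDeriv k l (T x)) μ :=
  (hint k l).mono' ((weightedDerivCLM_s7 k l).continuous.comp hT).aestronglyMeasurable
    (.of_forall fun x ↦ (norm_weightedDeriv k l (T x)).le)

theorem SchwartzMap.hasFTaylorSeriesUpTo_integral [CompleteSpace F] (hT : Continuous T)
    (hint : ∀ k l, Integrable (fun x ↦ SchwartzMap.seminorm ℝ k l (T x)) μ) :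
    HasFTaylorSeriesUpTo ∞ (fun y ↦ ∫ x, T x y ∂μ)
      (fun y l ↦ ∫ x, iteratedFDeriv ℝ l (T x) y ∂μ) := by
  refine (hasFTaylorSeriesUpTo_top_iff' le_rfl).2 ⟨fun y ↦ ?_, fun l y ↦ ?_⟩
  · rw [ContinuousMultilinearMap.curry0, ContinuousMultilinearMap.integral_apply
      (integrable_iteratedFDeriv_family hT hint 0 y)]
    simp
  · have hcurry : (∫ x, iteratedFDeriv ℝ (l + 1) (T x) y ∂μ).curryLeft
        = ∫ x, fderiv ℝ (iteratedFDeriv ℝ l (T x)) y ∂μ := by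
      let L : (E [×(l + 1)]→L[ℝ] F) →L[ℝ] E →L[ℝ] (E [×l]→L[ℝ] F) :=
        (continuousMultilinearCurryLeftEquiv ℝ (fun _ : Fin (l + 1) ↦ E)
          F).toContinuousLinearEquiv.toContinuousLinearMap
      have h := ContinuousLinearMap.integral_comp_comm (𝕜 := ℝ)
        (Fₗ := E →L[ℝ] (E [×l]→L[ℝ] F)) L
          (integrable_iteratedFDeriv_family hT hint (l + 1) y)
      refine Eq.trans h.symm (integral_congr_ae (.of_forall fun x ↦ ?_))
      simp [L, iteratedFDeriv_succ_eq_comp_left]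
    refine HasFDerivAt.congr_fderiv ?_ hcurry.symm
    refine hasFDerivAt_integral_of_dominated_of_fderiv_le
      (bound := fun x ↦ SchwartzMap.seminorm ℝ 0 (l + 1) (T x))
      (F' := fun z x ↦ fderiv ℝ (iteratedFDeriv ℝ l (T x)) z) univ_mem
      (.of_forall fun z ↦ (continuous_iteratedFDeriv_family hT l z).aestronglyMeasurable)
      (integrable_iteratedFDeriv_family hT hint l y) ?_ (.of_forall fun x z _ ↦ ?_) (hint 0 (l + 1))
      (.of_forall fun x z _ ↦ ?_)
    · have h := (continuousMultilinearCurryLeftEquiv ℝ (fun _ : Fin (l + 1) ↦ E)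
        F).continuous.comp (continuous_iteratedFDeriv_family hT (l + 1) y)
      refine (h.congr fun x ↦ ?_).aestronglyMeasurable
      simp [iteratedFDeriv_succ_eq_comp_left]
    · rw [norm_fderiv_iteratedFDeriv]
      exact norm_iteratedFDeriv_le_seminorm ℝ (T x) (l + 1) z
    · exact (((T x).smooth ⊤).differentiable_iteratedFDeriv (m := l)
        (mod_cast WithTop.coe_lt_top l) z).hasFDerivAt

/-- A continuous family of Schwartz functions all of whose seminorms are integrable has a Schwartz
integral, which commutes with every tempered distribution. -/
theorem SchwartzMap.exists_integral_eq [CompleteSpace F] (hT : Continuous T)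
    (hint : ∀ k l, Integrable (fun x ↦ SchwartzMap.seminorm ℝ k l (T x)) μ) :
    ∃ c : 𝓢(E, F), (∀ y, c y = ∫ x, T x y ∂μ) ∧
      ∀ f : 𝓢(E, F) →L[ℝ] ℝ, f c = ∫ x, f (T x) ∂μ := by
  have htaylor := hasFTaylorSeriesUpTo_integral hT hint
  have hderiv (l : ℕ) (y : E) : iteratedFDeriv ℝ l (fun y ↦ ∫ x, T x y ∂μ) y
      = ∫ x, iteratedFDeriv ℝ l (T x) y ∂μ :=
    (htaylor.eq_iteratedFDeriv (mod_cast le_top) y).symm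
  let c : 𝓢(E, F) :=
    { toFun := fun y ↦ ∫ x, T x y ∂μ
      smooth' := htaylor.contDiff
      decay' := fun k l ↦ ⟨∫ x, SchwartzMap.seminorm ℝ k l (T x) ∂μ, fun y ↦ by
        rw [hderiv, ← norm_norm y, ← norm_pow, ← norm_smul, ← integral_smul]
        refine norm_integral_le_of_norm_le (hint k l) (.of_forall fun x ↦ ?_)
        simpa [norm_smul] using le_seminorm ℝ k l (T x) y⟩ }
  refine ⟨c, fun y ↦ rfl, fun f ↦ ?_⟩
  obtain ⟨s, C, -, hC⟩ := Seminorm.bound_of_continuous (schwartz_withSeminorms ℝ E F)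
    ((normSeminorm ℝ ℝ).comp f.toLinearMap) (continuous_norm.comp f.continuous)
  refine apply_eq_integral_of_norm_le (B := fun i : s ↦ BoundedMultilinearField E F i.1.2)
    (fun i ↦ (weightedDerivCLM_s7 i.1.1 i.1.2).toLinearMap) f.toLinearMap C (fun η ↦ ?_) T c
    (fun i ↦ integrable_weightedDeriv_family hT hint _ _) fun i ↦ ?_
  · refine (hC η).trans ?_
    change (C : ℝ) * (s.sup (schwartzSeminormFamily ℝ E F)) η ≤ _
    gcongr
    refine Seminorm.finset_sup_apply_le (by positivity) fun i hi ↦ ?_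
    rw [schwartzSeminormFamily, ← norm_weightedDeriv]
    exact norm_le_pi_norm (fun i : s ↦ weightedDeriv i.1.1 i.1.2 η) ⟨i, hi⟩
  · refine ext_evalCLM fun y ↦ ?_
    have h := (BoundedMultilinearField.evalCLM i.1.2 y).integral_comp_comm
      (integrable_weightedDeriv_family (μ := μ) hT hint i.1.1 i.1.2)
    refine Eq.trans ?_ h
    change ‖y‖ ^ i.1.1 • iteratedFDeriv ℝ i.1.2 (fun y ↦ ∫ x, T x y ∂μ) y
      = ∫ x, ‖y‖ ^ i.1.1 • iteratedFDeriv ℝ i.1.2 (T x) y ∂μ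
    rw [hderiv, integral_smul]

end Family

theorem SchwartzMap.exists_seminorm_compSubConstCLM_le (k l : ℕ) (Θ : 𝓢(E, F)) :
    ∃ C, 0 ≤ C ∧ ∀ x, SchwartzMap.seminorm ℝ k l (Θ.compSubConstCLM ℝ x) ≤ C * (1 + ‖x‖) ^ k := by
  refine ⟨2 ^ k * (Finset.Iic (k, l)).sup (fun m ↦ SchwartzMap.seminorm ℝ m.1 m.2) Θ,
    by positivity, fun x ↦ seminorm_le_bound ℝ k l _ (by positivity) fun y ↦ ?_⟩
  have hy : ‖y‖ ≤ (1 + ‖y - x‖) * (1 + ‖x‖) := by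
    have h := norm_add_le (y - x) x
    rw [sub_add_cancel] at h
    nlinarith [norm_nonneg x, norm_nonneg (y - x), mul_nonneg (norm_nonneg x) (norm_nonneg (y - x))]
  have hd : iteratedFDeriv ℝ l (Θ.compSubConstCLM ℝ x) y = iteratedFDeriv ℝ l Θ (y - x) :=
    iteratedFDeriv_comp_sub l x y
  rw [hd]
  calc ‖y‖ ^ k * ‖iteratedFDeriv ℝ l Θ (y - x)‖
      ≤ ((1 + ‖y - x‖) * (1 + ‖x‖)) ^ k * ‖iteratedFDeriv ℝ l Θ (y - x)‖ := by gcongr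
    _ = (1 + ‖y - x‖) ^ k * ‖iteratedFDeriv ℝ l Θ (y - x)‖ * (1 + ‖x‖) ^ k := by
      rw [mul_pow]; ring
    _ ≤ _ := by
      refine mul_le_mul_of_nonneg_right ?_ (by positivity)
      exact one_add_le_sup_seminorm_apply (𝕜 := ℝ) (m := (k, l)) le_rfl le_rfl Θ (y - x)

theorem SchwartzMap.exists_seminorm_compSubConstCLM_sub_le (k l : ℕ) (Θ : 𝓢(E, F)) :
    ∃ C, ∀ h, SchwartzMap.seminorm ℝ k l (Θ.compSubConstCLM ℝ h - Θ)
      ≤ C * (1 + ‖h‖) ^ k * ‖h‖ := by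
  obtain ⟨C, hC0, hC⟩ := exists_seminorm_compSubConstCLM_le k (l + 1) Θ
  refine ⟨C, fun h ↦ seminorm_le_bound ℝ k l _ (by positivity) fun y ↦ ?_⟩
  have hd : iteratedFDeriv ℝ l (⇑(Θ.compSubConstCLM ℝ h - Θ)) y
      = iteratedFDeriv ℝ l Θ (y - h) - iteratedFDeriv ℝ l Θ y := by
    rw [FunLike.coe_sub, iteratedFDeriv_sub_apply (((compSubConstCLM ℝ h Θ).smooth l).contDiffAt)
      ((Θ.smooth l).contDiffAt)]
    congr 1
    exact iteratedFDeriv_comp_sub l h y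
  have hdiff : Differentiable ℝ (iteratedFDeriv ℝ l Θ) :=
    (Θ.smooth ⊤).differentiable_iteratedFDeriv (mod_cast WithTop.coe_lt_top l)
  have hmv := (convex_segment (𝕜 := ℝ) (0 : E) h).norm_image_sub_le_of_norm_hasFDerivWithin_le
    (f := fun z ↦ ‖y‖ ^ k • iteratedFDeriv ℝ l Θ (y - z))
    (f' := fun z ↦ ‖y‖ ^ k • -(fderiv ℝ (iteratedFDeriv ℝ l Θ) (y - z)))
    (C := C * (1 + ‖h‖) ^ k) (x := 0) (y := h) (fun z _ ↦ ?_) (fun z hz ↦ ?_)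
    (left_mem_segment ℝ _ _) (right_mem_segment ℝ _ _)
  · rw [hd]
    simpa [← smul_sub, norm_smul] using hmv
  · have h1 := (hdiff (y - z)).hasFDerivAt.comp z ((hasFDerivAt_id z).const_sub y)
    have h2 := (h1.const_smul (‖y‖ ^ k)).hasFDerivWithinAt (s := segment ℝ 0 h)
    refine (h2.congr_fderiv (by simp)).congr (fun _ _ ↦ rfl) rfl
  · have hz' : ‖z‖ ≤ ‖h‖ := by
      simpa using (convex_closedBall (0 : E) ‖h‖).segment_subset
        (by simp) (by simp) hz
    have hd' : iteratedFDeriv ℝ (l + 1) (Θ.compSubConstCLM ℝ z) y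
        = iteratedFDeriv ℝ (l + 1) Θ (y - z) := iteratedFDeriv_comp_sub (l + 1) z y
    have h1 := le_seminorm ℝ k (l + 1) (Θ.compSubConstCLM ℝ z) y
    rw [hd', ← norm_fderiv_iteratedFDeriv] at h1
    rw [norm_smul, norm_neg, norm_pow, norm_norm]
    exact h1.trans ((hC z).trans (by gcongr))

theorem SchwartzMap.continuous_compSubConstCLM_s7 (Θ : 𝓢(E, F)) :
    Continuous fun x ↦ Θ.compSubConstCLM ℝ x := by
  have h0 : Tendsto (fun h ↦ Θ.compSubConstCLM ℝ h) (𝓝 0) (𝓝 Θ) := by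
    rw [(schwartz_withSeminorms ℝ E F).tendsto_nhds _ _]
    rintro ⟨k, l⟩ ε hε
    obtain ⟨C, hC⟩ := exists_seminorm_compSubConstCLM_sub_le k l Θ
    have hcont : Continuous fun h : E ↦ C * (1 + ‖h‖) ^ k * ‖h‖ := by fun_prop
    have hlim : Tendsto (fun h : E ↦ C * (1 + ‖h‖) ^ k * ‖h‖) (𝓝 0) (𝓝 0) := by
      simpa using hcont.tendsto 0
    exact (hlim.eventually_lt_const hε).mono fun h hh ↦ (hC h).trans_lt hh
  refine continuous_iff_continuousAt.2 fun x ↦ ?_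
  have hx : Tendsto (fun x' ↦ x' - x) (𝓝 x) (𝓝 0) := by
    simpa using (by fun_prop : Continuous fun x' ↦ x' - x).tendsto x
  have h := ((compSubConstCLM ℝ x (F := F)).continuous.tendsto Θ).comp (h0.comp hx)
  refine h.congr fun x' ↦ ?_
  simp

section Convolution

variable [MeasurableSpace E] [BorelSpace E] [SecondCountableTopology E]
  {μ : Measure E} [μ.HasTemperateGrowth]

/-- The integral of the translates of `Θ` against a Schwartz density `g` is a Schwartz function,
and this integral commutes with every tempered distribution. -/
theorem SchwartzMap.exists_integral_translate_eq (Θ g : 𝓢(E, ℝ)) :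
    ∃ c : 𝓢(E, ℝ), (∀ y, c y = ∫ x, g x * Θ (y - x) ∂μ) ∧
      ∀ f : 𝓢(E, ℝ) →L[ℝ] ℝ, f c = ∫ x, g x * f (Θ.compSubConstCLM ℝ x) ∂μ := by
  have hT : Continuous fun x ↦ g x • Θ.compSubConstCLM ℝ x :=
    g.continuous.smul (continuous_compSubConstCLM_s7 Θ)
  obtain ⟨c, hc, hf⟩ := exists_integral_eq (μ := μ) hT fun k l ↦ by
    obtain ⟨C, hC0, hC⟩ := exists_seminorm_compSubConstCLM_le k l Θ
    have hbound : Integrable (fun x ↦ C * 2 ^ (k - 1) * (‖g x‖ + ‖x‖ ^ k * ‖g x‖)) μ :=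
      (g.integrable.norm.add (g.integrable_pow_mul μ k)).const_mul _
    refine hbound.mono' (((schwartz_withSeminorms ℝ E ℝ).continuous_seminorm
      (k, l)).comp hT).aestronglyMeasurable (.of_forall fun x ↦ ?_)
    rw [Real.norm_of_nonneg (apply_nonneg _ _), map_smul_eq_mul]
    have hp : (1 + ‖x‖) ^ k ≤ 2 ^ (k - 1) * (1 ^ k + ‖x‖ ^ k) :=
      add_pow_le zero_le_one (norm_nonneg x) k
    calc ‖g x‖ * SchwartzMap.seminorm ℝ k l (Θ.compSubConstCLM ℝ x)
        ≤ ‖g x‖ * (C * (2 ^ (k - 1) * (1 ^ k + ‖x‖ ^ k))) := by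
          gcongr
          exact (hC x).trans (by gcongr)
      _ = _ := by ring
  refine ⟨c, fun y ↦ by simp [hc], fun f ↦ by simp [hf]⟩

end Convolution

end SchwartzIntegral

section AnisotropicDilation

open scoped SchwartzMap

variable {m : ℕ}

theorem exists_schwartzMap_eq_anisoDil (a : Fin m → ℝ) (θ₀ θ : 𝓢(Fin m → ℝ, ℝ)) (j : ℕ) :
    ∃ Θ : 𝓢(Fin m → ℝ, ℝ), ∀ x, Θ x = anisoDil a θ₀ θ j x := by
  by_cases hj : j = 0
  · exact ⟨θ₀, fun x ↦ by simp [anisoDil, hj]⟩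
  · have hpos (i : Fin m) : (2 : ℝ) ^ ((j : ℝ) * a i) ≠ 0 := by positivity
    let D : (Fin m → ℝ) ≃L[ℝ] (Fin m → ℝ) :=
      (LinearEquiv.piCongrRight fun i ↦
        LinearEquiv.smulOfNeZero ℝ ℝ ((2 : ℝ) ^ ((j : ℝ) * a i)) (hpos i)).toContinuousLinearEquiv
    refine ⟨(2 : ℝ) ^ ((j : ℝ) * ∑ i, a i) •
      SchwartzMap.compCLMOfContinuousLinearEquiv ℝ D θ, fun x ↦ ?_⟩
    simp only [anisoDil, hj, if_false]
    rfl

theorem neg_of_anisoDil_ne_zero {a : Fin m → ℝ} {θ₀ θ : (Fin m → ℝ) → ℝ} {i : Fin m}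
    (h₀ : tsupport θ₀ ⊆ {x | x i < 0}) (h : tsupport θ ⊆ {x | x i < 0}) {j : ℕ} {x : Fin m → ℝ}
    (hx : anisoDil a θ₀ θ j x ≠ 0) : x i < 0 := by
  unfold anisoDil at hx
  split_ifs at hx with hj
  · exact h₀ (subset_tsupport _ hx)
  · have hlt : (2 : ℝ) ^ ((j : ℝ) * a i) * x i < 0 :=
      h (subset_tsupport _ (right_ne_zero_of_mul hx))
    exact neg_of_mul_neg_right hlt (by positivity)

end AnisotropicDilation

section Convolution

open scoped SchwartzMap

variable {E : Type*} [NormedAddCommGroup E] [NormedSpace ℝ E]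

/-- The reflection `x ↦ θ (-x)` of a Schwartz function. -/
def SchwartzMap.reflect (θ : 𝓢(E, ℝ)) : 𝓢(E, ℝ) :=
  SchwartzMap.compCLMOfContinuousLinearEquiv ℝ (ContinuousLinearEquiv.neg ℝ) θ

@[simp]
theorem SchwartzMap.reflect_apply (θ : 𝓢(E, ℝ)) (x : E) : θ.reflect x = θ (-x) := rfl

theorem SchwartzMap.integral_integral_convolution [MeasurableSpace E] [BorelSpace E]
    [SecondCountableTopology E] {μ : Measure E} [μ.HasTemperateGrowth] [SFinite μ]
    [μ.IsAddRightInvariant] (P Q χ : 𝓢(E, ℝ)) (y : E) :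
    ∫ x, (∫ z, χ z * P (z - x) ∂μ) * Q (x - y) ∂μ
      = ∫ z, (∫ w, P (z - y - w) * Q w ∂μ) * χ z ∂μ := by
  have hint : Integrable
      (fun p : E × E ↦ P (p.2 - p.1) * (Q (p.1 - y) * χ p.2)) (μ.prod μ) := by
    refine ((Q.integrable.comp_sub_right y).mul_prod χ.integrable).bdd_mul
      (c := SchwartzMap.seminorm ℝ 0 0 P) ?_ (.of_forall fun p ↦ P.norm_le_seminorm ℝ _)
    exact (P.continuous.comp (continuous_snd.sub continuous_fst)).aestronglyMeasurable
  have hinner (z : E) : ∫ w, P (z - y - w) * Q w ∂μ = ∫ x, P (z - x) * Q (x - y) ∂μ := by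
    rw [← integral_sub_right_eq_self (fun w ↦ P (z - y - w) * Q w) y]
    simp
  simp_rw [hinner, ← integral_mul_const]
  calc ∫ x, ∫ z, χ z * P (z - x) * Q (x - y) ∂μ ∂μ
      = ∫ x, ∫ z, P (z - x) * (Q (x - y) * χ z) ∂μ ∂μ := by
        congr! 4; ring
    _ = ∫ z, ∫ x, P (z - x) * (Q (x - y) * χ z) ∂μ ∂μ := integral_integral_swap hint
    _ = _ := by simp_rw [mul_assoc]

end Convolution

/-- With `φ₀, φ, ψ₀, ψ ∈ 𝓢(ℝⁿ)` supported in `{xₙ < 0}`, `φ, ψ` having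
vanishing moments of all orders, and assuming the Calderón reproducing formula, the extension
operator `E_u(f) = Σ_j ψ_j * e₊(φ_j * f)` satisfies `⟨E_u(f), χ⟩ = ⟨f, χ⟩` for every
`f ∈ 𝓢'(ℝⁿ)` and every smooth compactly supported `χ` with `supp χ ⊆ {xₙ > 0}`. -/
theorem universal_extension_is_extension (n : ℕ) (a : Fin (n+1) → ℝ)
    (ha : ∀ i, 1 ≤ a i)
    (φ₀ φ ψ₀ ψ : SchwartzMap (Fin (n+1) → ℝ) ℝ)
    (hφ₀s : tsupport ⇑φ₀ ⊆ {x : Fin (n+1) → ℝ | x (Fin.last n) < 0})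
    (hφs : tsupport ⇑φ ⊆ {x : Fin (n+1) → ℝ | x (Fin.last n) < 0})
    (hψ₀s : tsupport ⇑ψ₀ ⊆ {x : Fin (n+1) → ℝ | x (Fin.last n) < 0})
    (hψs : tsupport ⇑ψ ⊆ {x : Fin (n+1) → ℝ | x (Fin.last n) < 0})
    (hφm : VanishingMoments ⇑φ) (hψm : VanishingMoments ⇑ψ)
    -- Calderón reproducing formula: `u = Σ_j ψ_j * (φ_j * u)` weak* in `𝓢'(ℝⁿ)`
    (hCalderon : ∀ (u : SchwartzMap (Fin (n+1) → ℝ) ℝ →L[ℝ] ℝ)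
        (η : SchwartzMap (Fin (n+1) → ℝ) ℝ)
        (c : ℕ → SchwartzMap (Fin (n+1) → ℝ) ℝ),
        (∀ (j : ℕ) (x : Fin (n+1) → ℝ),
          c j x = ∫ y : Fin (n+1) → ℝ,
            (∫ z : Fin (n+1) → ℝ,
              anisoDil a ⇑ψ₀ ⇑ψ j ((y - x) - z) * anisoDil a ⇑φ₀ ⇑φ j z) * η y) →
        Tendsto (fun N => ∑ j ∈ Finset.range N, u (c j)) atTop (nhds (u η)))
    (f : SchwartzMap (Fin (n+1) → ℝ) ℝ →L[ℝ] ℝ)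
    (χ : SchwartzMap (Fin (n+1) → ℝ) ℝ) (hχc : HasCompactSupport ⇑χ)
    (hχs : tsupport ⇑χ ⊆ {x : Fin (n+1) → ℝ | 0 < x (Fin.last n)})
    -- `tr j x` is the Schwartz function `y ↦ φ_j(x − y)`, so `(φ_j * f)(x) = f (tr j x)`
    (tr : ℕ → (Fin (n+1) → ℝ) → SchwartzMap (Fin (n+1) → ℝ) ℝ)
    (htr : ∀ (j : ℕ) (x y : Fin (n+1) → ℝ), tr j x y = anisoDil a ⇑φ₀ ⇑φ j (x - y)) :
    Tendsto (fun N => ∑ j ∈ Finset.range N,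
        ∫ x in {x : Fin (n+1) → ℝ | 0 < x (Fin.last n)},
          f (tr j x) * (∫ z : Fin (n+1) → ℝ, anisoDil a ⇑ψ₀ ⇑ψ j (z - x) * χ z))
      atTop (nhds (f χ)) := by
  choose Φ hΦ using exists_schwartzMap_eq_anisoDil a φ₀ φ
  choose Ψ hΨ using exists_schwartzMap_eq_anisoDil a ψ₀ ψ
  choose g hg _ using fun j ↦
    SchwartzMap.exists_integral_translate_eq (μ := volume) (Ψ j).reflect χ
  choose c hc hfc using fun j ↦
    SchwartzMap.exists_integral_translate_eq (μ := volume) (Φ j).reflect (g j)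
  have hg' (j : ℕ) (x : Fin (n + 1) → ℝ) : g j x = ∫ z, χ z * Ψ j (z - x) := by simp [hg]
  have hlim := hCalderon f χ c fun j y ↦ by
    simp_rw [← hΨ, ← hΦ, ← SchwartzMap.integral_integral_convolution, hc, hg',
      SchwartzMap.reflect_apply, neg_sub]
  refine hlim.congr fun N ↦ Finset.sum_congr rfl fun j _ ↦ ?_
  have htr' (x : Fin (n + 1) → ℝ) :
      SchwartzMap.compSubConstCLM ℝ x (Φ j).reflect = tr j x := by
    ext y
    simp [htr, hΦ]
  have hsupp (x : Fin (n + 1) → ℝ) (hx : x ∉ {x | 0 < x (Fin.last n)}) : g j x = 0 := by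
    rw [hg']
    refine integral_eq_zero_of_ae (.of_forall fun z ↦ ?_)
    by_contra hz
    have hz₁ := hχs (subset_tsupport _ (left_ne_zero_of_mul hz))
    have hz₂ := right_ne_zero_of_mul hz
    rw [hΨ] at hz₂
    have hz₃ := neg_of_anisoDil_ne_zero hψ₀s hψs hz₂
    simp only [Set.mem_ofPred_eq, Pi.sub_apply] at hx hz₁ hz₃
    linarith
  calc f (c j) = ∫ x, g j x * f (tr j x) := by simp_rw [hfc, htr']
    _ = ∫ x in {x | 0 < x (Fin.last n)}, g j x * f (tr j x) :=
      (setIntegral_eq_integral_of_forall_compl_eq_zero fun x hx ↦ by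
        rw [hsupp x hx, zero_mul]).symm
    _ = _ := by simp_rw [hg', hΨ, mul_comm]

end
end
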